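/- arXiv:1703.08941 — 14 statements merged into one kernel-verified Lean document; each statement's English description precedes it below -/
import Mathlib

section
/- If A·(1 + C − B) > 1, then K(q) > 0 for every q ∈ (0, 1]; consequently F is strictly increasing on (0, 1] and attains its maximum over (0, 1] uniquely at q = 1. -/
open Real Set

/-!
Put `a = 1 - A` and `g q = (1 - a q)(C - B q²) - a q²`. For `q ≠ 0` one has `K q = g q / q²`, and
`F' q = K q · exp (-B q - C / q)`. The hypothesis says exactly `g 1 > 0`, i.e. `C - B > a / A`.
On `(0, 1]` this propagates down from `q = 1`: the factor `C - B q²` is at least `C - B`, while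
`1 - a q ≥ A`, so `(1 - a q)(C - B q²) ≥ A (C - B) > a ≥ a q²`. Hence `K > 0` there, `F` has
positive derivative on `(0, 1]`, and is strictly increasing, with unique maximizer `q = 1`.
-/

/-- If `A·(1 + C − B) > 1`, then `K(q) > 0` for every `q ∈ (0, 1]`;
consequently `F` is strictly increasing on `(0, 1]` and attains its maximum over `(0, 1]`
uniquely at `q = 1`. -/
theorem stmt_1 (A B C : ℝ) (hA0 : 0 < A) (hA1 : A < 1) (hB : 0 < B) (hC : 0 < C)
    (F K : ℝ → ℝ)
    (hF : ∀ q, F q = (q * A + 1 - q) * Real.exp (-B * q - C / q))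
    (hK : ∀ q, K q = (A + 1 / q - 1) * (1 + C / q - B * q) - 1 / q)
    (hcond : 1 < A * (1 + C - B)) :
    (∀ q ∈ Set.Ioc (0 : ℝ) 1, 0 < K q) ∧
    StrictMonoOn F (Set.Ioc (0 : ℝ) 1) ∧
    (∀ q ∈ Set.Ioc (0 : ℝ) 1, q ≠ 1 → F q < F 1) := by
  have hKg : ∀ q, q ≠ 0 →
      K q = ((1 - (1 - A) * q) * (C - B * q ^ 2) - (1 - A) * q ^ 2) / q ^ 2 := by
    intro q hq
    rw [hK]
    field_simp
    ring
  have hKpos : ∀ q ∈ Set.Ioc (0 : ℝ) 1, 0 < K q := by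
    rintro q ⟨hq0, hq1⟩
    rw [hKg q hq0.ne']
    refine div_pos ?_ (by positivity)
    have hsq : q ^ 2 ≤ 1 := pow_le_one₀ hq0.le hq1
    have hAC : 1 - A < A * (C - B) := by linarith
    have hCB : 0 < C - B := pos_of_mul_pos_right (by linarith) hA0.le
    have h1 : A ≤ 1 - (1 - A) * q := by nlinarith
    have h2 : C - B ≤ C - B * q ^ 2 := by nlinarith
    have h3 : A * (C - B) ≤ (1 - (1 - A) * q) * (C - B * q ^ 2) :=
      mul_le_mul h1 h2 hCB.le (by linarith)
    have h4 : (1 - A) * q ^ 2 ≤ 1 - A := by nlinarith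
    linarith
  have hderiv : ∀ q, q ≠ 0 → HasDerivAt F (K q * Real.exp (-B * q - C / q)) q := by
    intro q hq
    have hlin : HasDerivAt (fun x : ℝ => x * A + 1 - x) (1 * A - 1) q :=
      (((hasDerivAt_id' q).mul_const A).add_const 1).sub (hasDerivAt_id' q)
    have hexp : HasDerivAt (fun x : ℝ => -B * x - C / x)
        (-B * 1 - (0 * q - C * 1) / q ^ 2) q :=
      ((hasDerivAt_id' q).const_mul (-B)).sub
        ((hasDerivAt_const q C).div (hasDerivAt_id' q) hq)
    rw [show F = fun x => (x * A + 1 - x) * Real.exp (-B * x - C / x) from funext hF]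
    refine (hlin.mul hexp.exp).congr_deriv ?_
    rw [hKg q hq]
    field_simp
    ring
  have hmono : StrictMonoOn F (Set.Ioc (0 : ℝ) 1) := by
    refine strictMonoOn_of_deriv_pos (convex_Ioc 0 1)
      (fun q hq => (hderiv q hq.1.ne').continuousAt.continuousWithinAt) fun q hq => ?_
    have hq' := interior_subset hq
    rw [(hderiv q hq'.1.ne').deriv]
    exact mul_pos (hKpos q hq') (Real.exp_pos _)
  exact ⟨hKpos, hmono, fun q hq hne =>
    hmono hq ⟨one_pos, le_rfl⟩ (lt_of_le_of_ne hq.2 hne)⟩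
end

section
/- If q₀ ∈ (0, 1] satisfies K(q₀) = 0, then C/q₀ > B·q₀ and K'(q₀) < 0. Consequently, K has at most one zero in (0, 1]. -/
open Real Set

/-!
Put `p(q) = A + 1/q - 1` and `s(q) = C/q - B q`. Then `K = p s - (1 - A)`, where `p > 0` on
`(0, 1]`, so a zero of `K` satisfies `p s = 1 - A > 0` and hence `s > 0`. Both `p` and `s` are
strictly decreasing, so `K' = p' s + p s' < 0` at a zero. For the same reason `p s` cannot take
the value `1 - A` at two distinct points: at both of them `p` and `s` would be positive.
-/

theorem stmt_2 (A B C : ℝ) (hA0 : 0 < A) (hA1 : A < 1) (hB : 0 < B) (hC : 0 < C)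
    (F K : ℝ → ℝ)
    (hF : ∀ q, F q = (q * A + 1 - q) * Real.exp (-B * q - C / q))
    (hK : ∀ q, K q = (A + 1 / q - 1) * (1 + C / q - B * q) - 1 / q) :
    (∀ q₀ ∈ Set.Ioc (0 : ℝ) 1, K q₀ = 0 → B * q₀ < C / q₀ ∧ deriv K q₀ < 0) ∧
    (∀ q₁ ∈ Set.Ioc (0 : ℝ) 1, ∀ q₂ ∈ Set.Ioc (0 : ℝ) 1,
      K q₁ = 0 → K q₂ = 0 → q₁ = q₂) := by
  have hp : ∀ q ∈ Set.Ioc (0 : ℝ) 1, 0 < A + 1 / q - 1 := by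
    intro q hq
    have := one_le_one_div hq.1 hq.2
    linarith
  have hps : ∀ q, K q = 0 → (A + 1 / q - 1) * (C / q - B * q) = 1 - A := by
    intro q h
    rw [hK] at h
    linear_combination h
  have hs : ∀ q ∈ Set.Ioc (0 : ℝ) 1, K q = 0 → 0 < C / q - B * q := by
    intro q hq h
    refine pos_of_mul_pos_right ?_ (hp q hq).le
    rw [hps q h]
    linarith
  have hlt : ∀ q₁ ∈ Set.Ioc (0 : ℝ) 1, ∀ q₂ ∈ Set.Ioc (0 : ℝ) 1,
      K q₁ = 0 → K q₂ = 0 → ¬ q₁ < q₂ := by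
    intro q₁ h₁ q₂ h₂ k₁ k₂ h
    have hu : 1 / q₂ < 1 / q₁ := one_div_lt_one_div_of_lt h₁.1 h
    have hc : C / q₂ < C / q₁ := div_lt_div_of_pos_left hC h₁.1 h
    have hb : B * q₁ < B * q₂ := mul_lt_mul_of_pos_left h hB
    have := mul_lt_mul'' (show A + 1 / q₂ - 1 < A + 1 / q₁ - 1 by linarith)
      (show C / q₂ - B * q₂ < C / q₁ - B * q₁ by linarith) (hp q₂ h₂).le (hs q₂ h₂ k₂).le
    rw [hps q₁ k₁, hps q₂ k₂] at this
    exact lt_irrefl _ this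
  refine ⟨fun q hq h => ⟨by linarith [hs q hq h], ?_⟩, fun q₁ h₁ q₂ h₂ k₁ k₂ =>
    le_antisymm (not_lt.1 (hlt q₂ h₂ q₁ h₁ k₂ k₁)) (not_lt.1 (hlt q₁ h₁ q₂ h₂ k₁ k₂))⟩
  have hq0 : q ≠ 0 := hq.1.ne'
  have hinv : HasDerivAt (fun x : ℝ => x⁻¹) (-(q ^ 2)⁻¹) q := hasDerivAt_inv hq0
  have hd := (((hinv.const_add A).sub_const 1).mul
    (((hinv.const_mul C).const_add 1).sub ((hasDerivAt_id q).const_mul B))).sub hinv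
  have hKd : HasDerivAt K
      (-((q ^ 2)⁻¹ * (C / q - B * q) + (A + 1 / q - 1) * (C * (q ^ 2)⁻¹ + B))) q := by
    refine (hd.congr_of_eventuallyEq (Filter.Eventually.of_forall fun x => ?_)).congr_deriv ?_
    · simp [hK, div_eq_mul_inv, add_sub_assoc]
    · simp [div_eq_mul_inv]
      ring
  rw [hKd.deriv, neg_lt_zero]
  have := hs q hq h
  have := hp q hq
  have := hq.1
  positivity
end

section
/- If K(1) < 0, then there exists a unique q° ∈ (0, 1) with K(q°) = 0; moreover K(q) > 0 for q ∈ (0, q°) and K(q) < 0 for q ∈ (q°, 1], F is strictly increasing on (0, q°] and strictly decreasing on [q°, 1], and q° is the unique maximizer of F over (0, 1]. -/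
open Real Set

/-!
Two identities carry the proof. With `a = 1 - A`,

* `F' q = K q * exp (-B q - C / q)` for `q ≠ 0`, so monotonicity of `F` is the sign of `K`;
* `K q = (1 - a q) * (C / q ^ 2 - B - a / (1 - a q))`. On `(0, 1]` the first factor is positive
  and the second is strictly decreasing, so `K` changes sign at most once, from `+` to `-`.

Existence of the zero is the intermediate value theorem on `[0, 1]` for the cubic `q ^ 2 * K q`,
which equals `C > 0` at `q = 0` and `K 1 < 0` at `q = 1`.
-/

/-- The sign of `K` is governed by a strictly decreasing function: the second factor of
`K q = (1 - (1 - A) q) * (C / q ^ 2 - B - (1 - A) / (1 - (1 - A) q))`. -/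
lemma reduced_strictAntiOn {A C : ℝ} (B : ℝ) (hA0 : 0 < A) (hA1 : A < 1) (hC : 0 < C) :
    StrictAntiOn (fun q : ℝ => C / q ^ 2 - B - (1 - A) / (1 - (1 - A) * q)) (Ioc 0 1) := by
  rintro p ⟨hp0, hp1⟩ q ⟨hq0, hq1⟩ hpq
  have hq : 0 < 1 - (1 - A) * q := by nlinarith
  have h1 : C / q ^ 2 < C / p ^ 2 := by gcongr
  have h2 : (1 - A) / (1 - (1 - A) * p) ≤ (1 - A) / (1 - (1 - A) * q) := by
    have : 0 ≤ 1 - A := by linarith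
    gcongr
  show C / q ^ 2 - B - _ < C / p ^ 2 - B - _
  linarith

lemma hasDerivAt_link (A B C : ℝ) {q : ℝ} (hq : q ≠ 0) :
    HasDerivAt (fun q : ℝ => (q * A + 1 - q) * Real.exp (-B * q - C / q))
      (((A + 1 / q - 1) * (1 + C / q - B * q) - 1 / q) * Real.exp (-B * q - C / q)) q := by
  have h1 : HasDerivAt (fun q : ℝ => q * A + 1 - q) (1 * A - 1) q :=
    (((hasDerivAt_id q).mul_const A).add_const 1).sub (hasDerivAt_id q)
  have h2 : HasDerivAt (fun q : ℝ => -B * q - C / q) (-B * 1 - (0 * q - C * 1) / q ^ 2) q :=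
    ((hasDerivAt_id q).const_mul (-B)).sub ((hasDerivAt_const q C).div (hasDerivAt_id q) hq)
  refine (h1.mul h2.exp).congr_deriv ?_
  field_simp
  ring

/-- If `K(1) < 0`, then there exists a unique `q° ∈ (0, 1)` with `K(q°) = 0`;
moreover `K(q) > 0` for `q ∈ (0, q°)` and `K(q) < 0` for `q ∈ (q°, 1]`, `F` is strictly
increasing on `(0, q°]` and strictly decreasing on `[q°, 1]`, and `q°` is the unique
maximizer of `F` over `(0, 1]`. -/
theorem stmt_3 (A B C : ℝ) (hA0 : 0 < A) (hA1 : A < 1) (hB : 0 < B) (hC : 0 < C)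
    (F K : ℝ → ℝ)
    (hF : ∀ q, F q = (q * A + 1 - q) * Real.exp (-B * q - C / q))
    (hK : ∀ q, K q = (A + 1 / q - 1) * (1 + C / q - B * q) - 1 / q)
    (hK1 : K 1 < 0) :
    ∃ q0 ∈ Set.Ioo (0 : ℝ) 1, K q0 = 0 ∧
      (∀ q ∈ Set.Ioo (0 : ℝ) 1, K q = 0 → q = q0) ∧
      (∀ q ∈ Set.Ioo (0 : ℝ) q0, 0 < K q) ∧
      (∀ q ∈ Set.Ioc q0 1, K q < 0) ∧
      StrictMonoOn F (Set.Ioc (0 : ℝ) q0) ∧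
      StrictAntiOn F (Set.Icc q0 1) ∧
      (∀ q ∈ Set.Ioc (0 : ℝ) 1, q ≠ q0 → F q < F q0) := by
  set h : ℝ → ℝ := fun q => C / q ^ 2 - B - (1 - A) / (1 - (1 - A) * q) with hh
  have hanti : StrictAntiOn h (Ioc 0 1) := reduced_strictAntiOn B hA0 hA1 hC
  have hpos : ∀ q ∈ Ioc (0 : ℝ) 1, 0 < 1 - (1 - A) * q := by
    rintro q ⟨h0, h1⟩
    nlinarith
  have hKh : ∀ q ∈ Ioc (0 : ℝ) 1, K q = (1 - (1 - A) * q) * h q := by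
    intro q hq
    have h0 : q ≠ 0 := hq.1.ne'
    have h1 := (hpos q hq).ne'
    rw [hK, hh]
    beta_reduce
    rw [mul_sub (1 - (1 - A) * q), mul_div_cancel₀ _ h1]
    field_simp
    ring
  obtain ⟨q0, hq0, hKq0⟩ : ∃ q0 ∈ Ioo (0 : ℝ) 1, K q0 = 0 := by
    let g : ℝ → ℝ := fun q => (1 - (1 - A) * q) * (C - B * q ^ 2) - (1 - A) * q ^ 2
    have hg : ContinuousOn g (Icc 0 1) := by fun_prop
    have hg0 : 0 < g 0 := by simpa [g] using hC
    have hg1 : g 1 < 0 := by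
      rw [hK] at hK1
      simp only [g]
      linarith
    obtain ⟨q, hq, hgq⟩ := intermediate_value_Ioo' zero_le_one hg ⟨hg1, hg0⟩
    refine ⟨q, hq, ?_⟩
    have h0 : q ≠ 0 := hq.1.ne'
    have hgK : K q = g q / q ^ 2 := by
      rw [hK]
      simp only [g]
      field_simp
      ring
    rw [hgK, hgq, zero_div]
  have hq0' : q0 ∈ Ioc (0 : ℝ) 1 := ⟨hq0.1, hq0.2.le⟩
  have hh0 : h q0 = 0 := by
    rw [hKh q0 hq0'] at hKq0
    exact (mul_eq_zero.mp hKq0).resolve_left (hpos q0 hq0').ne'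
  have hKpos : ∀ q ∈ Ioo (0 : ℝ) q0, 0 < K q := by
    intro q hq
    have hq' : q ∈ Ioc (0 : ℝ) 1 := ⟨hq.1, (hq.2.trans hq0.2).le⟩
    rw [hKh q hq']
    exact mul_pos (hpos q hq') (hh0 ▸ hanti hq' hq0' hq.2)
  have hKneg : ∀ q ∈ Ioc q0 1, K q < 0 := by
    intro q hq
    have hq' : q ∈ Ioc (0 : ℝ) 1 := ⟨hq0.1.trans hq.1, hq.2⟩
    rw [hKh q hq']
    exact mul_neg_of_pos_of_neg (hpos q hq') (hh0 ▸ hanti hq0' hq' hq.1)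
  have hderiv : ∀ q, q ≠ 0 → HasDerivAt F (K q * Real.exp (-B * q - C / q)) q := by
    intro q hq
    rw [hK, funext hF]
    exact hasDerivAt_link A B C hq
  have hmono : StrictMonoOn F (Ioc 0 q0) := by
    refine strictMonoOn_of_deriv_pos (convex_Ioc 0 q0)
      (fun q hq => (hderiv q hq.1.ne').continuousAt.continuousWithinAt) fun q hq => ?_
    rw [interior_Ioc] at hq
    rw [(hderiv q hq.1.ne').deriv]
    exact mul_pos (hKpos q hq) (Real.exp_pos _)
  have hdecr : StrictAntiOn F (Icc q0 1) := by
    refine strictAntiOn_of_deriv_neg (convex_Icc q0 1)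
      (fun q hq => (hderiv q (hq0.1.trans_le hq.1).ne').continuousAt.continuousWithinAt)
      fun q hq => ?_
    rw [interior_Icc] at hq
    rw [(hderiv q (hq0.1.trans hq.1).ne').deriv]
    exact mul_neg_of_neg_of_pos (hKneg q ⟨hq.1, hq.2.le⟩) (Real.exp_pos _)
  refine ⟨q0, hq0, hKq0, fun q hq hKq => ?_, hKpos, hKneg, hmono, hdecr, fun q hq hne => ?_⟩
  · rcases lt_trichotomy q q0 with hlt | heq | hgt
    · exact absurd hKq (hKpos q ⟨hq.1, hlt⟩).ne'
    · exact heq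
    · exact absurd hKq (hKneg q ⟨hgt, hq.2.le⟩).ne
  · rcases hne.lt_or_gt with hlt | hgt
    · exact hmono ⟨hq.1, hlt.le⟩ ⟨hq0.1, le_rfl⟩ hlt
    · exact hdecr ⟨le_rfl, hq0.2.le⟩ ⟨hgt.le, hq.2⟩ hgt
end

section
/- Let B, C > 0 and let 0 < A₁ < A₂ < 1. If q₁, q₂ ∈ (0, 1] satisfy K(q₁; A₁) = 0 and K(q₂; A₂) = 0, then q₁ < q₂. (The zero of K is strictly increasing in the parameter A.) -/
open Real Set

/-!
Put `N(q) = q + C - B q²`. For `q ∈ (0, 1]` and `0 < a < 1`, the equation `K(q; a) = 0` reads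
`N(q) (a q + 1 - q) = q` with `0 < a q + 1 - q < 1`; hence `N(q) > q > 0` and
`a = 1 - 1/q + 1/N(q)` (`stmt_4_zero`). So it suffices that the right-hand side is nondecreasing
in `q` where `N(q) > q`. For `q₂ ≤ q₁` this follows from
`N(q₁) - N(q₂) = (q₁ - q₂)(1 - B(q₁ + q₂)) ≤ q₁ - q₂` and `N(q₁) N(q₂) > q₁ q₂`.
-/

/-- A zero `q ∈ (0, 1]` satisfies `q + C - B q² > q`, and its parameter `a` is an explicit
function of `q`. -/
lemma stmt_4_zero {B C a q : ℝ} (ha : 0 < a) (ha1 : a < 1) (hq : 0 < q) (hq1 : q ≤ 1)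
    (h : (a + 1 / q - 1) * (1 + C / q - B * q) - 1 / q = 0) :
    q < q + C - B * q ^ 2 ∧ a = 1 - 1 / q + 1 / (q + C - B * q ^ 2) := by
  have hE : (q + C - B * q ^ 2) * (a * q + 1 - q) = q := by
    field_simp at h
    linarith
  have hs : 0 < a * q + 1 - q := by nlinarith [mul_pos ha hq]
  have hs1 : a * q + 1 - q < 1 := by nlinarith
  generalize q + C - B * q ^ 2 = N at hE ⊢
  have hN : 0 < N := pos_of_mul_pos_left (hE.symm ▸ hq) hs.le
  refine ⟨by nlinarith, ?_⟩
  field_simp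
  linarith

/-- Let `B, C > 0` and `0 < A₁ < A₂ < 1`.  If `q₁, q₂ ∈ (0, 1]` satisfy
`K(q₁; A₁) = 0` and `K(q₂; A₂) = 0`, then `q₁ < q₂`.  (The zero of `K` is strictly
increasing in the parameter `A`.) -/
theorem stmt_4 (B C : ℝ) (hB : 0 < B) (hC : 0 < C)
    (K : ℝ → ℝ → ℝ)
    (hK : ∀ a q, K a q = (a + 1 / q - 1) * (1 + C / q - B * q) - 1 / q)
    (A₁ A₂ : ℝ) (hA₁ : 0 < A₁) (hA : A₁ < A₂) (hA₂ : A₂ < 1)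
    (q₁ q₂ : ℝ) (hq₁ : q₁ ∈ Set.Ioc (0 : ℝ) 1) (hq₂ : q₂ ∈ Set.Ioc (0 : ℝ) 1)
    (hz₁ : K A₁ q₁ = 0) (hz₂ : K A₂ q₂ = 0) :
    q₁ < q₂ := by
  rw [hK] at hz₁ hz₂
  obtain ⟨hN₁, e₁⟩ := stmt_4_zero hA₁ (hA.trans hA₂) hq₁.1 hq₁.2 hz₁
  obtain ⟨hN₂, e₂⟩ := stmt_4_zero (hA₁.trans hA) hA₂ hq₂.1 hq₂.2 hz₂
  have h₁ := hq₁.1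
  have h₂ := hq₂.1
  by_contra! hle
  have hdiff : (q₁ + C - B * q₁ ^ 2) - (q₂ + C - B * q₂ ^ 2) ≤ q₁ - q₂ := by
    nlinarith [mul_nonneg hB.le (mul_nonneg (sub_nonneg.2 hle) (add_pos h₁ h₂).le)]
  generalize q₁ + C - B * q₁ ^ 2 = N₁ at *
  generalize q₂ + C - B * q₂ ^ 2 = N₂ at *
  have p₁ : 0 < N₁ := h₁.trans hN₁
  have p₂ : 0 < N₂ := h₂.trans hN₂
  have key : 1 / N₂ - 1 / N₁ ≤ 1 / q₂ - 1 / q₁ := by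
    calc 1 / N₂ - 1 / N₁ = (N₁ - N₂) / (N₁ * N₂) := by field_simp
      _ ≤ (q₁ - q₂) / (N₁ * N₂) := by gcongr
      _ ≤ (q₁ - q₂) / (q₁ * q₂) := by
        have := sub_nonneg.2 hle
        gcongr
      _ = 1 / q₂ - 1 / q₁ := by field_simp
  linarith
end

section
/- Let A ∈ (0, 1) and B > 0, and let 0 < C₁ < C₂. If q₁, q₂ ∈ (0, 1] satisfy K(q₁; C₁) = 0 and K(q₂; C₂) = 0, then q₁ < q₂. (The zero of K is strictly increasing in the parameter C.) -/
/-!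
Clearing denominators in `K(q; c) = 0` makes the equation linear in `c`, with solution
`c = q² (B + (1 - A) / (1 - (1 - A) q))` (`param_of_zero`). For `0 < A < 1` and `B > 0` the right
side is increasing in `q` on `(0, 1]`, so a larger parameter forces a larger zero.
-/

open Real Set

/-- Solving `K(q; c) = 0` for the parameter gives `c` as an explicit function of `q`,
so monotonicity of the zero in `c` reduces to monotonicity of that function. -/
lemma param_of_zero {A B c q : ℝ} (hq : 0 < q) (hd : 0 < 1 - (1 - A) * q)
    (h : (A + 1 / q - 1) * (1 + c / q - B * q) - 1 / q = 0) :
    c = q ^ 2 * (B + (1 - A) / (1 - (1 - A) * q)) := by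
  have hd' := hd.ne'
  have h2 : (1 - (1 - A) * q) * (q + c - B * q ^ 2) - q = 0 := by
    have e : (1 - (1 - A) * q) * (q + c - B * q ^ 2) - q
        = q ^ 2 * ((A + 1 / q - 1) * (1 + c / q - B * q) - 1 / q) := by
      field_simp
      ring
    rw [e, h, mul_zero]
  have h3 : c * (1 - (1 - A) * q) = q ^ 2 * (B * (1 - (1 - A) * q) + (1 - A)) := by
    linear_combination h2
  apply mul_right_cancel₀ hd'
  rw [h3, mul_assoc, add_mul, div_mul_cancel₀ _ hd']

/-- Let `A ∈ (0, 1)`, `B > 0` and `0 < C₁ < C₂`.  If `q₁, q₂ ∈ (0, 1]`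
satisfy `K(q₁; C₁) = 0` and `K(q₂; C₂) = 0`, then `q₁ < q₂`.  (The zero of `K` is
strictly increasing in the parameter `C`.) -/
theorem stmt_5 (A B : ℝ) (hA0 : 0 < A) (hA1 : A < 1) (hB : 0 < B)
    (K : ℝ → ℝ → ℝ)
    (hK : ∀ c q, K c q = (A + 1 / q - 1) * (1 + c / q - B * q) - 1 / q)
    (C₁ C₂ : ℝ) (hC₁ : 0 < C₁) (hC : C₁ < C₂)
    (q₁ q₂ : ℝ) (hq₁ : q₁ ∈ Set.Ioc (0 : ℝ) 1) (hq₂ : q₂ ∈ Set.Ioc (0 : ℝ) 1)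
    (hz₁ : K C₁ q₁ = 0) (hz₂ : K C₂ q₂ = 0) :
    q₁ < q₂ := by
  have hd : ∀ q ∈ Set.Ioc (0 : ℝ) 1, 0 < 1 - (1 - A) * q := by
    rintro q ⟨h0, h1⟩
    nlinarith
  have e₁ := param_of_zero hq₁.1 (hd _ hq₁) (hK C₁ q₁ ▸ hz₁)
  have e₂ := param_of_zero hq₂.1 (hd _ hq₂) (hK C₂ q₂ ▸ hz₂)
  by_contra! hle
  have hd₁ := hd _ hq₁
  have hA : 0 < 1 - A := sub_pos.2 hA1
  have hq₂0 := hq₂.1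
  have hd₂ := hd _ hq₂
  have : C₂ ≤ C₁ := by
    rw [e₁, e₂]
    gcongr
  exact absurd hC this.not_gt
end

section
/- For every q > 0 with w₁(q) > w₂(q) (equivalently, for every q > q_m), the derivative of φ is strictly positive: φ'(q) > 0. Hence φ is strictly increasing on (q_m, ∞). -/
/-!
Put `x = ρ ^ δ * q`, `s = α / 2 > 1`, `A = (w₁ - 1)⁻¹ = (1 + x) ^ s / β₁` and
`B = (w₂ - 1)⁻¹ = x ^ s / β₂`.  For `q > 0` one has
`φ = 1 - (1 + x) (1 + A) / (x (1 + B))`.  Since `(1 + x) dA/dx = s A` and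
`x dB/dx = s B`, the numerator of the derivative of the quotient is
`s x (A - B) - (1 + A) (1 + B + s B)`, which is negative as soon as `A < B`, that is `w₂ < w₁`.

If `q > q_m` and `k = (β₁ / β₂) ^ δ`, then `1 + x < k x`; raising this to the power `s` and using
`k ^ s = β₁ / β₂` gives `w₂ < w₁`, so strict monotonicity follows from the sign of the derivative.
-/

open Real Set

/-- The function `φ` with `x = c * q`, rewritten through `1 / (w₁ - 1)` and `1 / (w₂ - 1)`, has
positive derivative wherever `1 / (w₁ - 1) < 1 / (w₂ - 1)`. -/
lemma deriv_one_sub_quotient_pos {s c b₁ b₂ q : ℝ} (hs : 0 < s) (hc : 0 < c) (hb₁ : 0 < b₁)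
    (hb₂ : 0 < b₂) (hq : 0 < q) (hAB : (1 + c * q) ^ s / b₁ < (c * q) ^ s / b₂) :
    0 < deriv (fun q : ℝ => 1 - ((1 + c * q) * (1 + (1 + c * q) ^ s / b₁)) /
      (c * q * (1 + (c * q) ^ s / b₂))) q := by
  have hx : 0 < c * q := by positivity
  have hx1 : 0 < 1 + c * q := by positivity
  have hX : HasDerivAt (fun q : ℝ => c * q) c q := by
    simpa using (hasDerivAt_id q).const_mul c
  have hX1 : HasDerivAt (fun q : ℝ => 1 + c * q) c q := hX.const_add 1
  have hA := (hX1.rpow_const (p := s) (Or.inl hx1.ne')).div_const b₁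
  have hB := (hX.rpow_const (p := s) (Or.inl hx.ne')).div_const b₂
  have hD : c * q * (1 + (c * q) ^ s / b₂) ≠ 0 := by positivity
  have h := ((hX1.mul (hA.const_add 1)).div (hX.mul (hB.const_add 1)) hD).const_sub 1
  refine lt_of_lt_of_eq ?_ h.deriv.symm
  simp only [Pi.mul_apply]
  rw [rpow_sub_one hx1.ne', rpow_sub_one hx.ne', neg_pos]
  apply div_neg_of_neg_of_pos _ (by positivity)
  set A := (1 + c * q) ^ s / b₁ with hAdef
  set B := (c * q) ^ s / b₂ with hBdef
  have hA0 : 0 < A := by positivity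
  have hB0 : 0 < B := by positivity
  have e1 : (1 + c * q) * (c * s * ((1 + c * q) ^ s / (1 + c * q)) / b₁) = c * s * A := by
    rw [hAdef]; field_simp
  have e2 : c * q * (c * s * ((c * q) ^ s / (c * q)) / b₂) = c * s * B := by
    rw [hBdef]; field_simp
  rw [e1, e2]
  have h1 : 0 < c * (s * (c * q) * (B - A)) := by
    have := sub_pos.2 hAB
    positivity
  have h2 : 0 < c * ((1 + A) * (1 + B + s * B)) := by positivity
  linarith

/-- The quotient in the definition of `φ`, at `x = ρ ^ δ * q > 0`, in terms of `1 / (w₁ - 1)` and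
`1 / (w₂ - 1)`. -/
lemma secrecy_quotient_eq {s x b₁ b₂ : ℝ} (hx : 0 < x) (hb₁ : 0 < b₁) (hb₂ : 0 < b₂) :
    ((1 + x) * (1 + b₁ * (1 + x) ^ (-s)) * (1 + b₂ * x ^ (-s) - 1)) /
      (x * (1 + b₁ * (1 + x) ^ (-s) - 1) * (1 + b₂ * x ^ (-s))) =
    ((1 + x) * (1 + (1 + x) ^ s / b₁)) / (x * (1 + x ^ s / b₂)) := by
  have hx1 : 0 < 1 + x := by positivity
  rw [rpow_neg hx.le, rpow_neg hx1.le]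
  have ha : 0 < (1 + x) ^ s := by positivity
  have hb : 0 < x ^ s := by positivity
  generalize (1 + x) ^ s = a at *
  generalize x ^ s = b at *
  rw [add_sub_cancel_left, add_sub_cancel_left]
  field_simp
  ring

/-- At `x = ρ ^ δ * q > 0`, the condition `w₂ < w₁` says `1 / (w₁ - 1) < 1 / (w₂ - 1)`. -/
lemma rate_lt_iff_inv_lt_inv {s x b₁ b₂ : ℝ} (hx : 0 < x) (hb₁ : 0 < b₁) (hb₂ : 0 < b₂) :
    1 + b₂ * x ^ (-s) < 1 + b₁ * (1 + x) ^ (-s) ↔ (1 + x) ^ s / b₁ < x ^ s / b₂ := by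
  have hx1 : 0 < 1 + x := by positivity
  rw [rpow_neg hx.le, rpow_neg hx1.le, add_lt_add_iff_left, ← div_eq_mul_inv, ← div_eq_mul_inv,
    div_lt_div_iff₀ (by positivity) (by positivity), div_lt_div_iff₀ hb₁ hb₂,
    mul_comm b₂, mul_comm b₁]

/-- For every `q > 0` with `w₁(q) > w₂(q)` (equivalently for `q > q_m`),
`φ'(q) > 0`.  Hence `φ` is strictly increasing on `(q_m, ∞)`. -/
theorem stmt_10 (α δ ρ β₁ β₂ : ℝ) (hα : 2 < α) (hδ : δ = 2 / α)
    (hρ : 0 < ρ) (hβ₂ : 0 < β₂) (hβ : β₂ < β₁)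
    (w₁ w₂ φ : ℝ → ℝ) (qm : ℝ)
    (hw₁ : ∀ q, w₁ q = 1 + β₁ * (1 + ρ ^ δ * q) ^ (-(α / 2)))
    (hw₂ : ∀ q, w₂ q = 1 + β₂ * (ρ ^ δ * q) ^ (-(α / 2)))
    (hφ : ∀ q, φ q = 1 -
      ((1 + ρ ^ δ * q) * w₁ q * (w₂ q - 1)) / (ρ ^ δ * q * (w₁ q - 1) * w₂ q))
    (hqm : qm = ρ ^ (-δ) / ((β₁ / β₂) ^ δ - 1)) :
    (∀ q > (0 : ℝ), w₂ q < w₁ q → 0 < deriv φ q) ∧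
    StrictMonoOn φ (Set.Ioi qm) := by
  have hβ₁ : 0 < β₁ := hβ₂.trans hβ
  have hs : 0 < α / 2 := by linarith
  have hδ0 : 0 < δ := by rw [hδ]; positivity
  have hc : 0 < ρ ^ δ := by positivity
  have main : ∀ q > (0 : ℝ), w₂ q < w₁ q → 0 < deriv φ q := by
    intro q hq hw
    rw [hw₁, hw₂, rate_lt_iff_inv_lt_inv (by positivity) hβ₁ hβ₂] at hw
    refine (deriv_one_sub_quotient_pos hs hc hβ₁ hβ₂ hq hw).trans_eq ?_
    apply Filter.EventuallyEq.deriv_eq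
    filter_upwards [lt_mem_nhds hq] with y hy
    rw [hφ, hw₁, hw₂, secrecy_quotient_eq (by positivity) hβ₁ hβ₂]
  have hk : 0 < (β₁ / β₂) ^ δ - 1 :=
    sub_pos.2 (one_lt_rpow ((one_lt_div hβ₂).2 hβ) hδ0)
  have hqm0 : 0 < qm := by rw [hqm]; positivity
  have hpos : ∀ q ∈ Set.Ioi qm, 0 < deriv φ q := by
    intro q hq
    have hq0 : 0 < q := hqm0.trans hq
    have hx : 0 < ρ ^ δ * q := by positivity
    refine main q hq0 ?_
    rw [hw₁, hw₂, rate_lt_iff_inv_lt_inv hx hβ₁ hβ₂, div_lt_div_iff₀ hβ₁ hβ₂]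
    have h1 : 1 + ρ ^ δ * q < (β₁ / β₂) ^ δ * (ρ ^ δ * q) := by
      have h := Set.mem_Ioi.1 hq
      rw [hqm, rpow_neg hρ.le, div_lt_iff₀ hk, inv_lt_iff_one_lt_mul₀ hc] at h
      linarith
    have h2 := rpow_lt_rpow (by positivity) h1 hs
    -- `δ * (α / 2) = 1`, so the constant becomes `β₁ / β₂`.
    rw [mul_rpow (by positivity) hx.le, ← rpow_mul (by positivity),
      show δ * (α / 2) = 1 by rw [hδ]; field_simp, rpow_one, div_mul_eq_mul_div,
      lt_div_iff₀ hβ₂] at h2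
    linarith
  refine ⟨main, strictMonoOn_of_deriv_pos (convex_Ioi qm) ?_ ?_⟩
  · intro q hq
    -- A nonzero value of `deriv` already forces differentiability.
    exact (differentiableAt_of_deriv_ne_zero
      (hpos q hq).ne').continuousAt.continuousWithinAt
  · rwa [interior_Ioi]
end

section
/- Suppose q_m < 1. Then: (i) if φ(1) < 0, then w is strictly increasing on [q_m, 1] and attains its maximum over (q_m, 1] uniquely at q = 1; (ii) if φ(1) ≥ 0, then there exists a unique q° ∈ (q_m, 1] with φ(q°) = 0, w is strictly increasing on [q_m, q°] and strictly decreasing on [q°, 1], and q° is the unique maximizer of w over (q_m, 1]. -/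
/-!
With `x = ρ ^ δ * q` and `p = α / 2`, differentiating gives `w' = -K φ` with `K > 0`, so the
monotonicity of `w` is governed by the sign of `φ`. Clearing denominators, `φ` is a negative multiple
of
`β₂ (1 + 1/x) ^ (p + 1) + β₁ β₂ (1/x) ^ (p + 1) - β₁` (`crossing`),
which is strictly decreasing in `x > 0`, since both powers are increasing in `1/x`. Hence `φ` changes
sign at most once, from negative to positive. At `q_m` one has `β₂ (1 + 1/x) ^ p = β₁`, so `crossing`
is positive there. If `φ 1 < 0` then `w' > 0` throughout `(q_m, 1)`; otherwise the intermediate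
value theorem yields the unique zero of `φ`, where `w` passes from increasing to decreasing.
-/

open Real Set

/-- The function of `x = ρ ^ δ * q` whose sign is opposite to that of `φ`; here `p = α / 2`. -/
noncomputable def crossing (p b₁ b₂ x : ℝ) : ℝ :=
  b₂ * (1 + 1 / x) ^ (p + 1) + b₁ * b₂ * (1 / x) ^ (p + 1) - b₁

/-- `φ` as a function of `x = ρ ^ δ * q`, with `p = α / 2`. -/
noncomputable def phiAux (p b₁ b₂ x : ℝ) : ℝ :=
  1 - ((1 + x) * (1 + b₁ * (1 + x) ^ (-p)) * (b₂ * x ^ (-p))) /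
    (x * (b₁ * (1 + x) ^ (-p)) * (1 + b₂ * x ^ (-p)))

lemma crossing_strictAntiOn {p b₁ b₂ : ℝ} (hp : 0 < p) (h₁ : 0 < b₁) (h₂ : 0 < b₂) :
    StrictAntiOn (crossing p b₁ b₂) (Ioi 0) := by
  intro x hx y hy hxy
  have hx : 0 < x := hx
  have hy : 0 < y := hy
  have hi : 1 / y < 1 / x := one_div_lt_one_div_of_lt hx hxy
  have hy' : 0 < 1 / y := by positivity
  have e₁ : (1 + 1 / y) ^ (p + 1) < (1 + 1 / x) ^ (p + 1) :=
    rpow_lt_rpow (by positivity) (by linarith) (by linarith)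
  have e₂ : (1 / y) ^ (p + 1) < (1 / x) ^ (p + 1) :=
    rpow_lt_rpow hy'.le hi (by linarith)
  have := mul_lt_mul_of_pos_left e₁ h₂
  have := mul_lt_mul_of_pos_left e₂ (mul_pos h₁ h₂)
  unfold crossing
  linarith

lemma crossing_continuousOn {p b₁ b₂ : ℝ} (hp : 0 < p) :
    ContinuousOn (crossing p b₁ b₂) (Ioi 0) := by
  have hi : ContinuousOn (fun x : ℝ => 1 / x) (Ioi 0) :=
    continuousOn_const.div continuousOn_id fun x hx => ne_of_gt hx
  have hp' : 0 ≤ p + 1 := by linarith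
  unfold crossing
  exact ((continuousOn_const.mul ((continuousOn_const.add hi).rpow_const fun _ _ => .inr hp')).add
    (continuousOn_const.mul (hi.rpow_const fun _ _ => .inr hp'))).sub continuousOn_const

lemma phiAux_eq {p b₁ b₂ x : ℝ} (h₁ : 0 < b₁) (h₂ : 0 < b₂) (hx : 0 < x) :
    phiAux p b₁ b₂ x = -(x ^ p / (b₁ * (x ^ p + b₂))) * crossing p b₁ b₂ x := by
  have hx1 : 0 < 1 + x := by linarith
  have hU : 0 < (1 + x) ^ p := rpow_pos_of_pos hx1 p
  have hV : 0 < x ^ p := rpow_pos_of_pos hx p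
  have e : 1 + 1 / x = (1 + x) / x := by field_simp; ring
  unfold phiAux crossing
  rw [e, div_rpow hx1.le hx.le, div_rpow one_pos.le hx.le, one_rpow, rpow_add_one hx1.ne',
    rpow_add_one hx.ne', rpow_neg hx1.le, rpow_neg hx.le]
  generalize (1 + x) ^ p = U at *
  generalize x ^ p = V at *
  field_simp
  ring

lemma phiAux_neg_iff {p b₁ b₂ x : ℝ} (h₁ : 0 < b₁) (h₂ : 0 < b₂) (hx : 0 < x) :
    phiAux p b₁ b₂ x < 0 ↔ 0 < crossing p b₁ b₂ x := by
  have hV : 0 < x ^ p := rpow_pos_of_pos hx p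
  have hK : 0 < x ^ p / (b₁ * (x ^ p + b₂)) := by positivity
  rw [phiAux_eq h₁ h₂ hx, neg_mul, neg_lt_zero, mul_pos_iff_of_pos_left hK]

lemma phiAux_eq_zero_iff {p b₁ b₂ x : ℝ} (h₁ : 0 < b₁) (h₂ : 0 < b₂) (hx : 0 < x) :
    phiAux p b₁ b₂ x = 0 ↔ crossing p b₁ b₂ x = 0 := by
  have hV : 0 < x ^ p := rpow_pos_of_pos hx p
  have hK : 0 < x ^ p / (b₁ * (x ^ p + b₂)) := by positivity
  rw [phiAux_eq h₁ h₂ hx, neg_mul, neg_eq_zero, mul_eq_zero_iff_left hK.ne']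

/-- The derivative of the secrecy rate in `x` is a positive multiple of `crossing`. -/
lemma exists_hasDerivAt_rate {p b₁ b₂ x : ℝ} (hp : 0 < p) (h₁ : 0 < b₁) (h₂ : 0 < b₂)
    (hx : 0 < x) : ∃ K > 0, HasDerivAt
      (fun x => log ((1 + b₁ * (1 + x) ^ (-p)) / (1 + b₂ * x ^ (-p))))
      (K * crossing p b₁ b₂ x) x := by
  have hx1 : 0 < 1 + x := by linarith
  have hu : 0 < (1 + x) ^ (-p) := rpow_pos_of_pos hx1 _
  have hv : 0 < x ^ (-p) := rpow_pos_of_pos hx _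
  have hV : 0 < x ^ p := rpow_pos_of_pos hx p
  have d₁ : HasDerivAt (fun x : ℝ => 1 + b₁ * (1 + x) ^ (-p))
      (b₁ * (1 * (-p) * (1 + x) ^ (-p - 1))) x :=
    ((((hasDerivAt_id x).const_add 1).rpow_const (.inl hx1.ne')).const_mul b₁).const_add 1
  have d₂ : HasDerivAt (fun x : ℝ => 1 + b₂ * x ^ (-p)) (b₂ * (1 * (-p) * x ^ (-p - 1))) x :=
    (((hasDerivAt_id x).rpow_const (.inl hx.ne')).const_mul b₂).const_add 1
  have d := (d₁.fun_div d₂ (by positivity)).log (by positivity)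
  refine ⟨p * (b₁ * (1 + x) ^ (-p)) / ((1 + x) * (1 + b₁ * (1 + x) ^ (-p))) *
    (x ^ p / (b₁ * (x ^ p + b₂))), by positivity, ?_⟩
  convert d using 1
  -- Expressing `crossing` through `phiAux` makes this a rational identity in `(1 + x) ^ (-p)`
  -- and `x ^ (-p)`.
  rw [mul_assoc, ← neg_neg (_ * crossing p b₁ b₂ x), ← neg_mul, ← phiAux_eq h₁ h₂ hx, phiAux,
    rpow_sub_one hx1.ne', rpow_sub_one hx.ne']
  generalize (1 + x) ^ (-p) = u at *
  generalize x ^ (-p) = v at *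
  field_simp
  ring

/-- At `x = 1 / ((b₁ / b₂) ^ p⁻¹ - 1)`, where the secrecy rate vanishes, `crossing` is positive. -/
lemma crossing_pos_of_eq {p b₁ b₂ x : ℝ} (hp : 0 < p) (h₁ : 0 < b₁) (h₂ : 0 < b₂) (hx : 0 < x)
    (h : 1 + 1 / x = (b₁ / b₂) ^ p⁻¹) : 0 < crossing p b₁ b₂ x := by
  have hi : 0 < 1 / x := by positivity
  have hpow : (1 + 1 / x) ^ p = b₁ / b₂ := by
    rw [h, ← rpow_mul (by positivity), inv_mul_cancel₀ hp.ne', rpow_one]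
  have hr : 0 < (1 / x) ^ (p + 1) := rpow_pos_of_pos hi _
  have e : b₂ * (b₁ / b₂ * (1 + 1 / x)) = b₁ + b₁ * (1 / x) := by field_simp
  unfold crossing
  rw [rpow_add_one (by positivity), hpow, e]
  have := mul_pos h₁ hi
  have := mul_pos (mul_pos h₁ h₂) hr
  linarith

/-- Suppose `q_m < 1`.  Then:
(i) if `φ(1) < 0`, then `w` is strictly increasing on `[q_m, 1]` and attains its maximum
over `(q_m, 1]` uniquely at `q = 1`;
(ii) if `φ(1) ≥ 0`, then there exists a unique `q° ∈ (q_m, 1]` with `φ(q°) = 0`, `w` is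
strictly increasing on `[q_m, q°]` and strictly decreasing on `[q°, 1]`, and `q°` is the
unique maximizer of `w` over `(q_m, 1]`. -/
theorem stmt_12 (α δ ρ β₁ β₂ : ℝ) (hα : 2 < α) (hδ : δ = 2 / α)
    (hρ : 0 < ρ) (hβ₂ : 0 < β₂) (hβ : β₂ < β₁)
    (w₁ w₂ w φ : ℝ → ℝ) (qm : ℝ)
    (hw₁ : ∀ q, w₁ q = 1 + β₁ * (1 + ρ ^ δ * q) ^ (-(α / 2)))
    (hw₂ : ∀ q, w₂ q = 1 + β₂ * (ρ ^ δ * q) ^ (-(α / 2)))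
    (hw : ∀ q, w q = Real.log (w₁ q / w₂ q))
    (hφ : ∀ q, φ q = 1 -
      ((1 + ρ ^ δ * q) * w₁ q * (w₂ q - 1)) / (ρ ^ δ * q * (w₁ q - 1) * w₂ q))
    (hqm : qm = ρ ^ (-δ) / ((β₁ / β₂) ^ δ - 1))
    (hqm1 : qm < 1) :
    (φ 1 < 0 →
      StrictMonoOn w (Set.Icc qm 1) ∧
      (∀ q ∈ Set.Ioc qm 1, q ≠ 1 → w q < w 1)) ∧
    (0 ≤ φ 1 →
      ∃ q0 ∈ Set.Ioc qm 1, φ q0 = 0 ∧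
        (∀ q ∈ Set.Ioc qm 1, φ q = 0 → q = q0) ∧
        StrictMonoOn w (Set.Icc qm q0) ∧
        StrictAntiOn w (Set.Icc q0 1) ∧
        (∀ q ∈ Set.Ioc qm 1, q ≠ q0 → w q < w q0)) := by
  have hβ₁ : 0 < β₁ := hβ₂.trans hβ
  have hα0 : 0 < α := by linarith
  obtain ⟨p, hpdef⟩ : ∃ p, p = α / 2 := ⟨_, rfl⟩
  have hp : 0 < p := by rw [hpdef]; linarith
  have hδp : δ = p⁻¹ := by rw [hδ, hpdef, inv_div]
  obtain ⟨c, hc⟩ : ∃ c, c = ρ ^ δ := ⟨_, rfl⟩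
  have hc0 : 0 < c := hc ▸ rpow_pos_of_pos hρ _
  simp only [← hpdef, ← hc] at hw₁ hw₂ hφ
  have hφ' : ∀ q, φ q = phiAux p β₁ β₂ (c * q) := by
    intro q
    simp only [hφ, hw₁, hw₂, phiAux, add_sub_cancel_left]
  have hw' : w = fun q => log ((1 + β₁ * (1 + c * q) ^ (-p)) / (1 + β₂ * (c * q) ^ (-p))) := by
    funext q
    rw [hw, hw₁, hw₂]
  have hb : 1 < (β₁ / β₂) ^ p⁻¹ :=
    one_lt_rpow ((one_lt_div hβ₂).2 hβ) (by positivity)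
  have hb' : 0 < (β₁ / β₂) ^ p⁻¹ - 1 := by linarith
  have hcqm : c * qm = 1 / ((β₁ / β₂) ^ p⁻¹ - 1) := by
    rw [hqm, rpow_neg hρ.le, ← hc, hδp]
    field_simp
  have hqm0 : 0 < qm := by
    have : 0 < c * qm := by rw [hcqm]; positivity
    exact (mul_pos_iff_of_pos_left hc0).1 this
  have hHm : 0 < crossing p β₁ β₂ (c * qm) := by
    refine crossing_pos_of_eq hp hβ₁ hβ₂ (by positivity) ?_
    rw [hcqm, one_div_one_div]
    ring
  have hanti : StrictAntiOn (fun q => crossing p β₁ β₂ (c * q)) (Ioi 0) := by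
    intro x hx y hy hxy
    exact crossing_strictAntiOn hp hβ₁ hβ₂ (mul_pos hc0 hx) (mul_pos hc0 hy)
      (mul_lt_mul_of_pos_left hxy hc0)
  have hder : ∀ q, 0 < q → ∃ K > 0, HasDerivAt w (K * crossing p β₁ β₂ (c * q)) q := by
    intro q hq
    obtain ⟨K, hK, hd⟩ := exists_hasDerivAt_rate hp hβ₁ hβ₂ (mul_pos hc0 hq)
    refine ⟨K * c, by positivity, ?_⟩
    have hl : HasDerivAt (fun q => c * q) c q := by
      simpa using (hasDerivAt_id q).const_mul c
    rw [hw', mul_right_comm]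
    exact hd.comp q hl
  have hcont : ContinuousOn w (Ioi 0) := fun q hq =>
    (hder q hq).choose_spec.2.continuousAt.continuousWithinAt
  have hinc : ∀ b, qm ≤ b → 0 ≤ crossing p β₁ β₂ (c * b) → StrictMonoOn w (Icc qm b) := by
    intro b hb hHb
    refine strictMonoOn_of_deriv_pos (convex_Icc _ _)
      (hcont.mono fun q hq => hqm0.trans_le hq.1) fun q hq => ?_
    rw [interior_Icc] at hq
    have hq0 : 0 < q := hqm0.trans hq.1
    obtain ⟨K, hK, hd⟩ := hder q hq0
    rw [hd.deriv]
    exact mul_pos hK (hHb.trans_lt (hanti hq0 (hq0.trans hq.2) hq.2))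
  have hdec : ∀ a, qm ≤ a → crossing p β₁ β₂ (c * a) ≤ 0 → StrictAntiOn w (Icc a 1) := by
    intro a ha hHa
    have ha0 : 0 < a := hqm0.trans_le ha
    refine strictAntiOn_of_deriv_neg (convex_Icc _ _)
      (hcont.mono fun q hq => ha0.trans_le hq.1) fun q hq => ?_
    rw [interior_Icc] at hq
    have hq0 : 0 < q := ha0.trans hq.1
    obtain ⟨K, hK, hd⟩ := hder q hq0
    rw [hd.deriv]
    exact mul_neg_of_pos_of_neg hK ((hanti ha0 hq0 hq.1).trans_le hHa)
  have hsign : ∀ q, 0 < q → (φ q < 0 ↔ 0 < crossing p β₁ β₂ (c * q)) := fun q hq => by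
    rw [hφ', phiAux_neg_iff hβ₁ hβ₂ (mul_pos hc0 hq)]
  have hzero : ∀ q, 0 < q → (φ q = 0 ↔ crossing p β₁ β₂ (c * q) = 0) := fun q hq => by
    rw [hφ', phiAux_eq_zero_iff hβ₁ hβ₂ (mul_pos hc0 hq)]
  constructor
  · intro h1
    have hm := hinc 1 hqm1.le ((hsign 1 one_pos).1 h1).le
    exact ⟨hm, fun q hq hne =>
      hm (Ioc_subset_Icc_self hq) (right_mem_Icc.2 hqm1.le) (lt_of_le_of_ne hq.2 hne)⟩
  · intro h1
    have hH1 : crossing p β₁ β₂ (c * 1) ≤ 0 :=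
      not_lt.1 fun h => h1.not_gt ((hsign 1 one_pos).2 h)
    have hHc : ContinuousOn (fun q => crossing p β₁ β₂ (c * q)) (Icc qm 1) :=
      (crossing_continuousOn hp).comp (continuous_const.mul continuous_id).continuousOn
        fun q hq => mul_pos hc0 (hqm0.trans_le hq.1)
    obtain ⟨q0, hq0, hH0⟩ := intermediate_value_Icc' hqm1.le hHc ⟨hH1, hHm.le⟩
    have hH0 : crossing p β₁ β₂ (c * q0) = 0 := hH0
    have hlt : qm < q0 := lt_of_le_of_ne hq0.1 fun h => by
      rw [h, hH0] at hHm
      exact hHm.false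
    have hq00 : 0 < q0 := hqm0.trans hlt
    have hm := hinc q0 hlt.le hH0.ge
    have ha := hdec q0 hlt.le hH0.le
    refine ⟨q0, ⟨hlt, hq0.2⟩, (hzero q0 hq00).2 hH0, fun q hq h => ?_, hm, ha, fun q hq hne => ?_⟩
    · have hqp : 0 < q := hqm0.trans hq.1
      exact hanti.injOn hqp hq00 (((hzero q hqp).1 h).trans hH0.symm)
    · rcases lt_or_gt_of_ne hne with h | h
      · exact hm ⟨hq.1.le, h.le⟩ (right_mem_Icc.2 hlt.le) h
      · exact ha (left_mem_Icc.2 hq0.2) ⟨h.le, hq.2⟩ h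
end

section
/- Let ρ₁, ρ₂ > 0 (with α, β₁, β₂ fixed). If q₁ > 0 and q₂ > 0 satisfy φ(q₁; ρ₁) = 0 and φ(q₂; ρ₂) = 0, then ρ₁^δ·q₁ = ρ₂^δ·q₂. (The zero of φ is inversely proportional to ρ^δ.) -/
/-!
Put `x = ρ ^ δ * q > 0` and `p = 1 + α / 2`. The equation `φ = 0` depends on `ρ, q` only through
`x`, and says `β₂⁻¹ * x ^ p - β₁⁻¹ * (1 + x) ^ p = 1`. The left side is
`x ^ p * (β₂⁻¹ - β₁⁻¹ * (1 + 1 / x) ^ p)`, whose two factors are strictly increasing, the second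
being positive at any solution; so there is at most one solution (`not_lt_of_zeros`).
-/

open Real Set

/-- Comparing `c * x ^ p - d * (1 + x) ^ p = 1` at `a < b`, with the division by `x ^ p` cleared:
`d * (a ^ p * (1 + b) ^ p - b ^ p * (1 + a) ^ p) = b ^ p - a ^ p`, where the left side is negative
and the right side positive. -/
lemma not_lt_of_zeros {a b c d p : ℝ} (ha : 0 < a) (hd : 0 < d) (hp : 0 < p)
    (h₁ : c * a ^ p - d * (1 + a) ^ p = 1) (h₂ : c * b ^ p - d * (1 + b) ^ p = 1) : ¬ a < b := by
  intro hab
  have hb : 0 < b := ha.trans hab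
  have h₃ : a ^ p < b ^ p := Real.rpow_lt_rpow ha.le hab hp
  have h₄ : (a * (1 + b)) ^ p < (b * (1 + a)) ^ p :=
    Real.rpow_lt_rpow (by positivity) (by linarith) hp
  rw [Real.mul_rpow ha.le (by positivity), Real.mul_rpow hb.le (by positivity)] at h₄
  have h₅ := mul_lt_mul_of_pos_left h₄ hd
  have h₆ : d * (a ^ p * (1 + b) ^ p) - d * (b ^ p * (1 + a) ^ p) = b ^ p - a ^ p := by
    linear_combination b ^ p * h₁ - a ^ p * h₂
  linarith

/-- The equation `φ = 0` with its (positive) denominator cleared. -/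
lemma zero_eq {x c d p : ℝ} (hx : 0 < x) (hc : 0 < c)
    (h : 1 - (1 + x + d * (1 + x) ^ p) / (x + c * x ^ p) = 0) :
    c * x ^ p - d * (1 + x) ^ p = 1 := by
  have hD : x + c * x ^ p ≠ 0 := by positivity
  have h' := (div_eq_one_iff_eq hD).1 (sub_eq_zero.1 h).symm
  linarith

/-- Let `ρ₁, ρ₂ > 0` (with `α, β₁, β₂` fixed).  If `q₁ > 0` and `q₂ > 0`
satisfy `φ(q₁; ρ₁) = 0` and `φ(q₂; ρ₂) = 0`, then `ρ₁^δ·q₁ = ρ₂^δ·q₂`.  (The zero of `φ`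
is inversely proportional to `ρ^δ`.) -/
theorem stmt_13 (α δ β₁ β₂ : ℝ) (hα : 2 < α) (hδ : δ = 2 / α)
    (hβ₂ : 0 < β₂) (hβ : β₂ < β₁)
    (φ : ℝ → ℝ → ℝ)
    (hφ : ∀ r q, φ r q = 1 -
      (1 + r ^ δ * q + β₁⁻¹ * (1 + r ^ δ * q) ^ (1 + α / 2)) /
        (r ^ δ * q + β₂⁻¹ * (r ^ δ * q) ^ (1 + α / 2)))
    (ρ₁ ρ₂ q₁ q₂ : ℝ) (hρ₁ : 0 < ρ₁) (hρ₂ : 0 < ρ₂) (hq₁ : 0 < q₁) (hq₂ : 0 < q₂)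
    (hz₁ : φ ρ₁ q₁ = 0) (hz₂ : φ ρ₂ q₂ = 0) :
    ρ₁ ^ δ * q₁ = ρ₂ ^ δ * q₂ := by
  rw [hφ] at hz₁ hz₂
  have hx₁ : 0 < ρ₁ ^ δ * q₁ := by positivity
  have hx₂ : 0 < ρ₂ ^ δ * q₂ := by positivity
  have hc : 0 < β₂⁻¹ := inv_pos.2 hβ₂
  have hd : 0 < β₁⁻¹ := inv_pos.2 (hβ₂.trans hβ)
  have hp : 0 < 1 + α / 2 := by linarith
  have e₁ := zero_eq hx₁ hc hz₁
  have e₂ := zero_eq hx₂ hc hz₂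
  exact le_antisymm (not_lt.1 (not_lt_of_zeros hx₂ hd hp e₂ e₁))
    (not_lt.1 (not_lt_of_zeros hx₁ hd hp e₁ e₂))
end

section
/- Let β₂ > 0 and β₂ < β₁ < β₁' (with α, ρ fixed). If q₁ > 0 and q₂ > 0 satisfy φ(q₁; β₁) = 0 and φ(q₂; β₁') = 0, then q₂ < q₁. (The zero of φ is strictly decreasing in the parameter β₁.) -/
open Real Set

/-! Write `x = ρ ^ δ * q`, `p = 1 + α / 2`, `b = β₁⁻¹` and `c = β₂⁻¹`. The equation `φ = 0` says
`1 + b * (1 + x) ^ p = c * x ^ p`, and dividing by `x ^ p` turns it into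
`(x⁻¹) ^ p + b * (1 + x⁻¹) ^ p = c` (`normalized_eq_of_zero`). The left side is antitone in `x > 0`
and strictly increasing in `b`. Raising `β₁` lowers `b`, so the two solutions cannot satisfy
`x₁ ≤ x₂`. -/

/-- A vanishing quotient has numerator equal to denominator, so a zero of `φ` solves an equation
with constant right side `c`. -/
lemma normalized_eq_of_zero {x b c p : ℝ} (hx : 0 < x) (hc : 0 < c)
    (h : 1 - (1 + x + b * (1 + x) ^ p) / (x + c * x ^ p) = 0) :
    (x⁻¹) ^ p + b * (1 + x⁻¹) ^ p = c := by
  have hxp : 0 < x ^ p := rpow_pos_of_pos hx p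
  have hD : x + c * x ^ p ≠ 0 := by positivity
  have h1 : 1 + x + b * (1 + x) ^ p = x + c * x ^ p := by
    have h2 : (1 + x + b * (1 + x) ^ p) / (x + c * x ^ p) = 1 := by linarith
    rwa [div_eq_one_iff_eq hD] at h2
  have h3 : 1 + x⁻¹ = (1 + x) / x := by field_simp; ring
  rw [h3, div_rpow (by positivity) hx.le, inv_rpow hx.le]
  field_simp
  linarith

/-- Let `β₂ > 0` and `β₂ < β₁ < β₁'` (with `α, ρ` fixed).  If `q₁ > 0` and
`q₂ > 0` satisfy `φ(q₁; β₁) = 0` and `φ(q₂; β₁') = 0`, then `q₂ < q₁`.  (The zero of `φ`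
is strictly decreasing in the parameter `β₁`.) -/
theorem stmt_14 (α δ ρ β₂ : ℝ) (hα : 2 < α) (hδ : δ = 2 / α) (hρ : 0 < ρ)
    (hβ₂ : 0 < β₂)
    (φ : ℝ → ℝ → ℝ)
    (hφ : ∀ b₁ q, φ b₁ q = 1 -
      (1 + ρ ^ δ * q + b₁⁻¹ * (1 + ρ ^ δ * q) ^ (1 + α / 2)) /
        (ρ ^ δ * q + β₂⁻¹ * (ρ ^ δ * q) ^ (1 + α / 2)))
    (β₁ β₁' : ℝ) (hβ : β₂ < β₁) (hβ' : β₁ < β₁')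
    (q₁ q₂ : ℝ) (hq₁ : 0 < q₁) (hq₂ : 0 < q₂)
    (hz₁ : φ β₁ q₁ = 0) (hz₂ : φ β₁' q₂ = 0) :
    q₂ < q₁ := by
  by_contra! hle
  have hr : 0 < ρ ^ δ := rpow_pos_of_pos hρ δ
  have hβ₁ : 0 < β₁ := hβ₂.trans hβ
  rw [hφ] at hz₁ hz₂
  have hx₁ : 0 < ρ ^ δ * q₁ := mul_pos hr hq₁
  have hx₂ : 0 < ρ ^ δ * q₂ := mul_pos hr hq₂
  have e₁ := normalized_eq_of_zero hx₁ (inv_pos.2 hβ₂) hz₁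
  have e₂ := normalized_eq_of_zero hx₂ (inv_pos.2 hβ₂) hz₂
  have hp : 0 ≤ 1 + α / 2 := by linarith
  have hinv : (ρ ^ δ * q₂)⁻¹ ≤ (ρ ^ δ * q₁)⁻¹ :=
    inv_anti₀ hx₁ (mul_le_mul_of_nonneg_left hle hr.le)
  have hA : ((ρ ^ δ * q₂)⁻¹) ^ (1 + α / 2) ≤ ((ρ ^ δ * q₁)⁻¹) ^ (1 + α / 2) :=
    rpow_le_rpow (by positivity) hinv hp
  have hB : (1 + (ρ ^ δ * q₂)⁻¹) ^ (1 + α / 2) ≤ (1 + (ρ ^ δ * q₁)⁻¹) ^ (1 + α / 2) :=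
    rpow_le_rpow (by positivity) (by linarith) hp
  have hpos : 0 < (1 + (ρ ^ δ * q₁)⁻¹) ^ (1 + α / 2) := rpow_pos_of_pos (by positivity) _
  have hC : β₁'⁻¹ * (1 + (ρ ^ δ * q₂)⁻¹) ^ (1 + α / 2)
      < β₁⁻¹ * (1 + (ρ ^ δ * q₁)⁻¹) ^ (1 + α / 2) :=
    (mul_le_mul_of_nonneg_left hB (inv_pos.2 (hβ₁.trans hβ')).le).trans_lt
      (mul_lt_mul_of_pos_right (inv_strictAnti₀ hβ₁ hβ') hpos)
  linarith
end

section
/- Let β₁ > 0 and 0 < β₂ < β₂' < β₁ (with α, ρ fixed). If q₁ > 0 and q₂ > 0 satisfy φ(q₁; β₂) = 0 and φ(q₂; β₂') = 0, then q₁ < q₂. (The zero of φ is strictly increasing in the parameter β₂.) -/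
/-! Put `y = ρ ^ δ * q > 0` and `p = 1 + α / 2 > 0`. Clearing the (positive) denominator and
dividing by `y ^ p`, the equation `φ = 0` becomes
`(1 / y) ^ p + β₁⁻¹ * (1 + 1 / y) ^ p = b₂⁻¹` (`inv_eq_of_zero`).
The left side is decreasing in `y`, the right side is strictly decreasing in `b₂`, so a larger
`b₂` forces a larger `y`, hence a larger `q`. -/

open Real Set

/-- The zero equation of `φ`, in terms of `y = ρ ^ δ * q`, solved for the inverse of `b₂`. -/
lemma inv_eq_of_zero {p c b y : ℝ} (hb : 0 < b) (hy : 0 < y)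
    (h : 1 - (1 + y + c * (1 + y) ^ p) / (y + b⁻¹ * y ^ p) = 0) :
    (1 / y) ^ p + c * (1 + 1 / y) ^ p = b⁻¹ := by
  have hyp : 0 < y ^ p := rpow_pos_of_pos hy p
  have hden : 0 < y + b⁻¹ * y ^ p := by positivity
  have h1 : 1 + y + c * (1 + y) ^ p = y + b⁻¹ * y ^ p :=
    ((div_eq_one_iff_eq hden.ne').1 (sub_eq_zero.1 h).symm)
  have h2 : 1 + 1 / y = (1 + y) / y := by field_simp; ring
  rw [h2, div_rpow zero_le_one hy.le, div_rpow (by positivity) hy.le, one_rpow,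
    ← mul_div_assoc, ← add_div, div_eq_iff hyp.ne']
  linarith

/-- Let `β₁ > 0` and `0 < β₂ < β₂' < β₁` (with `α, ρ` fixed).  If `q₁ > 0`
and `q₂ > 0` satisfy `φ(q₁; β₂) = 0` and `φ(q₂; β₂') = 0`, then `q₁ < q₂`.  (The zero of
`φ` is strictly increasing in the parameter `β₂`.) -/
theorem stmt_15 (α δ ρ β₁ : ℝ) (hα : 2 < α) (hδ : δ = 2 / α) (hρ : 0 < ρ)
    (φ : ℝ → ℝ → ℝ)
    (hφ : ∀ b₂ q, φ b₂ q = 1 -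
      (1 + ρ ^ δ * q + β₁⁻¹ * (1 + ρ ^ δ * q) ^ (1 + α / 2)) /
        (ρ ^ δ * q + b₂⁻¹ * (ρ ^ δ * q) ^ (1 + α / 2)))
    (β₂ β₂' : ℝ) (hβ₂ : 0 < β₂) (hβ : β₂ < β₂') (hβ' : β₂' < β₁)
    (q₁ q₂ : ℝ) (hq₁ : 0 < q₁) (hq₂ : 0 < q₂)
    (hz₁ : φ β₂ q₁ = 0) (hz₂ : φ β₂' q₂ = 0) :
    q₁ < q₂ := by
  have hβ₁ : 0 < β₁ := hβ₂.trans (hβ.trans hβ')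
  have hk : 0 < ρ ^ δ := rpow_pos_of_pos hρ δ
  have hp : 0 ≤ 1 + α / 2 := by linarith
  rw [hφ] at hz₁ hz₂
  have e₁ := inv_eq_of_zero hβ₂ (mul_pos hk hq₁) hz₁
  have e₂ := inv_eq_of_zero (hβ₂.trans hβ) (mul_pos hk hq₂) hz₂
  by_contra! hle
  have hinv : 1 / (ρ ^ δ * q₁) ≤ 1 / (ρ ^ δ * q₂) := by gcongr
  have hmono : β₂⁻¹ ≤ β₂'⁻¹ := by
    rw [← e₁, ← e₂]
    gcongr
  exact absurd hmono (not_le.2 (inv_strictAnti₀ hβ₂ hβ))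
end

section
/- Let c₁ > c₂ > 0 and for t > 0 set β₁(t) = c₁·t^(−α/2) and β₂(t) = c₂·t^(−α/2). If 0 < t < t' and q > 0, q' > 0 satisfy φ(q; β₁(t), β₂(t)) = 0 and φ(q'; β₁(t'), β₂(t')) = 0, then q' < q. (The zero of φ is strictly decreasing in the density parameter t.) -/
open Real Set

/-!
Put `x = ρ ^ δ * q`, `r = t ^ (-(α / 2))` and `p = 1 + α / 2`. A zero of `φ` is a solution of
`c₁ * c₂ * r + c₂ * (1 + x) ^ p = c₁ * x ^ p` (`zero_equation`), equivalently, after division by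
`x ^ p`, of `c₁ * c₂ * r / x ^ p + c₂ * ((1 + x) / x) ^ p = c₁`. The left side is strictly
increasing in `r` and decreasing in `x`, and `r` is strictly decreasing in `t`, so the solution
`x` strictly decreases as `t` grows (`root_lt_of_lt`).
-/

/-- The vanishing of `φ`, cleared of denominators. -/
lemma zero_equation {c₁ c₂ r x p : ℝ} (hc₁ : 0 < c₁) (hc₂ : 0 < c₂) (hr : 0 < r) (hx : 0 < x)
    (h : 1 - (1 + x + (c₁ * r)⁻¹ * (1 + x) ^ p) / (x + (c₂ * r)⁻¹ * x ^ p) = 0) :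
    c₁ * c₂ * r + c₂ * (1 + x) ^ p = c₁ * x ^ p := by
  have hX : 0 < x ^ p := Real.rpow_pos_of_pos hx p
  have hD : 0 < x + (c₂ * r)⁻¹ * x ^ p := by positivity
  have h1 : 1 + x + (c₁ * r)⁻¹ * (1 + x) ^ p = x + (c₂ * r)⁻¹ * x ^ p := by
    rw [sub_eq_zero, eq_div_iff hD.ne', one_mul] at h
    exact h.symm
  have h2 : 1 + (c₁ * r)⁻¹ * (1 + x) ^ p = (c₂ * r)⁻¹ * x ^ p := by linarith
  generalize (1 + x) ^ p = A at h2 ⊢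
  generalize x ^ p = X at h2 ⊢
  calc c₁ * c₂ * r + c₂ * A = c₁ * c₂ * r * (1 + (c₁ * r)⁻¹ * A) := by field_simp
    _ = c₁ * X := by rw [h2]; field_simp

/-- The root `x` of `c₁ * c₂ * r + c₂ * (1 + x) ^ p = c₁ * x ^ p` is strictly increasing in `r`. -/
lemma root_lt_of_lt {c₁ c₂ r r' x x' p : ℝ} (hc₁ : 0 < c₁) (hc₂ : 0 < c₂) (hr : 0 < r)
    (hrr : r' < r) (hx : 0 < x) (hx' : 0 < x') (hp : 0 ≤ p)
    (h : c₁ * c₂ * r + c₂ * (1 + x) ^ p = c₁ * x ^ p)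
    (h' : c₁ * c₂ * r' + c₂ * (1 + x') ^ p = c₁ * x' ^ p) : x' < x := by
  by_contra! hle
  have hX : 0 < x ^ p := Real.rpow_pos_of_pos hx p
  have hXX : x ^ p ≤ x' ^ p := Real.rpow_le_rpow hx.le hle hp
  -- `(1 + x) / x` is decreasing in `x`, stated without division
  have hmul : x ^ p * (1 + x') ^ p ≤ x' ^ p * (1 + x) ^ p := by
    rw [← Real.mul_rpow hx.le (by positivity), ← Real.mul_rpow hx'.le (by positivity)]
    exact Real.rpow_le_rpow (by positivity) (by linarith) hp
  have hlt : x ^ p * r' < x' ^ p * r :=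
    (mul_lt_mul_of_pos_left hrr hX).trans_le (mul_le_mul_of_nonneg_right hXX hr.le)
  have e : c₁ * c₂ * (x ^ p * r') + c₂ * (x ^ p * (1 + x') ^ p)
      = c₁ * c₂ * (x' ^ p * r) + c₂ * (x' ^ p * (1 + x) ^ p) := by
    linear_combination x ^ p * h' - x' ^ p * h
  have := mul_lt_mul_of_pos_left hlt (mul_pos hc₁ hc₂)
  have := mul_le_mul_of_nonneg_left hmul hc₂.le
  linarith

/-- Let `c₁ > c₂ > 0` and for `t > 0` set `β₁(t) = c₁·t^(−α/2)` and
`β₂(t) = c₂·t^(−α/2)`.  If `0 < t < t'` and `q > 0`, `q' > 0` satisfy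
`φ(q; β₁(t), β₂(t)) = 0` and `φ(q'; β₁(t'), β₂(t')) = 0`, then `q' < q`.  (The zero of
`φ` is strictly decreasing in the density parameter `t`.) -/
theorem stmt_16 (α δ ρ : ℝ) (hα : 2 < α) (hδ : δ = 2 / α) (hρ : 0 < ρ)
    (φ : ℝ → ℝ → ℝ → ℝ)
    (hφ : ∀ b₁ b₂ q, φ b₁ b₂ q = 1 -
      (1 + ρ ^ δ * q + b₁⁻¹ * (1 + ρ ^ δ * q) ^ (1 + α / 2)) /
        (ρ ^ δ * q + b₂⁻¹ * (ρ ^ δ * q) ^ (1 + α / 2)))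
    (c₁ c₂ : ℝ) (hc₂ : 0 < c₂) (hc : c₂ < c₁)
    (t t' : ℝ) (ht : 0 < t) (htt : t < t')
    (q q' : ℝ) (hq : 0 < q) (hq' : 0 < q')
    (hz : φ (c₁ * t ^ (-(α / 2))) (c₂ * t ^ (-(α / 2))) q = 0)
    (hz' : φ (c₁ * t' ^ (-(α / 2))) (c₂ * t' ^ (-(α / 2))) q' = 0) :
    q' < q := by
  have hc₁ : 0 < c₁ := hc₂.trans hc
  have ht' : 0 < t' := ht.trans htt
  have hk : 0 < ρ ^ δ := Real.rpow_pos_of_pos hρ δ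
  have hr : 0 < t ^ (-(α / 2)) := Real.rpow_pos_of_pos ht _
  have hr' : 0 < t' ^ (-(α / 2)) := Real.rpow_pos_of_pos ht' _
  have hrr : t' ^ (-(α / 2)) < t ^ (-(α / 2)) :=
    Real.rpow_lt_rpow_of_neg ht htt (by linarith)
  have hx : 0 < ρ ^ δ * q := mul_pos hk hq
  have hx' : 0 < ρ ^ δ * q' := mul_pos hk hq'
  rw [hφ] at hz hz'
  exact lt_of_mul_lt_mul_left
    (root_lt_of_lt hc₁ hc₂ hr hrr hx hx' (by linarith : (0 : ℝ) ≤ 1 + α / 2)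
      (zero_equation hc₁ hc₂ hr hx hz) (zero_equation hc₁ hc₂ hr' hx' hz')) hk.le
end

section
/- For every q > 0 with w₁(q) > w₂(q), if w'(q) > 0 then w''(q) < 0. (At any point of the positive-secrecy region where w is increasing, w is strictly concave.) -/
/-!
Put `a = α / 2`, `x = ρ ^ δ * q`, and for `y > 0` let `u β y = β y⁻ᵃ / (1 + β y⁻ᵃ)`. The function
`y ↦ log (1 + β y⁻ᵃ)` has derivative `-a u / y` and second derivative `(a u / y²) (1 + a (1 - u))`.
With `u₁ = u β₁ (1 + x)` and `u₂ = u β₂ x`, the claim becomes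

* `w₂ < w₁` says `u₂ < u₁`, since `wᵢ = 1 / (1 - uᵢ)`;
* `0 < w'` says `u₁ / (1 + x) < u₂ / x`;
* `w'' < 0` says
  `u₁ / (1 + x) * (1 + x)⁻¹ * (1 + a (1 - u₁)) < u₂ / x * x⁻¹ * (1 + a (1 - u₂))`,

and the last inequality holds factor by factor, all factors being positive.
-/

/-- The ratio `β y⁻ᵃ / (1 + β y⁻ᵃ)`, in terms of which the derivatives of `log (1 + β y⁻ᵃ)`
are rational. -/
noncomputable def ratio (a β y : ℝ) : ℝ := β * y ^ (-a) / (1 + β * y ^ (-a))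

lemma ratio_pos {a β y : ℝ} (hβ : 0 < β) (hy : 0 < y) : 0 < ratio a β y := by
  unfold ratio; positivity

lemma ratio_lt_one {a β y : ℝ} (hβ : 0 < β) (hy : 0 < y) : ratio a β y < 1 := by
  have : 0 < β * y ^ (-a) := by positivity
  unfold ratio
  rw [div_lt_one (by linarith)]
  linarith

lemma hasDerivAt_one_add {a β y : ℝ} (hy : 0 < y) :
    HasDerivAt (fun y : ℝ => 1 + β * y ^ (-a)) (-a * (β * y ^ (-a)) / y) y := by
  have h := ((Real.hasDerivAt_rpow_const (x := y) (p := -a) (Or.inl hy.ne')).const_mul β).const_add 1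
  refine h.congr_deriv ?_
  rw [Real.rpow_sub_one hy.ne']
  ring

lemma hasDerivAt_log_one_add {a β y : ℝ} (hβ : 0 < β) (hy : 0 < y) :
    HasDerivAt (fun y : ℝ => Real.log (1 + β * y ^ (-a))) (-a * ratio a β y / y) y := by
  have hp : 0 < 1 + β * y ^ (-a) := by positivity
  refine ((hasDerivAt_one_add (a := a) (β := β) hy).log hp.ne').congr_deriv ?_
  unfold ratio
  field_simp

lemma hasDerivAt_ratio {a β y : ℝ} (hβ : 0 < β) (hy : 0 < y) :
    HasDerivAt (ratio a β) (-a * ratio a β y * (1 - ratio a β y) / y) y := by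
  have hp : 0 < 1 + β * y ^ (-a) := by positivity
  have h := hasDerivAt_one_add (a := a) (β := β) hy
  have h' : HasDerivAt (fun y : ℝ => β * y ^ (-a)) (-a * (β * y ^ (-a)) / y) y := by
    simpa using h.sub_const 1
  refine (h'.div h hp.ne').congr_deriv ?_
  unfold ratio
  field_simp
  ring

lemma hasDerivAt_ratio_div {a β y : ℝ} (hβ : 0 < β) (hy : 0 < y) :
    HasDerivAt (fun y : ℝ => -a * ratio a β y / y)
      (a * (ratio a β y / y * y⁻¹ * (1 + a * (1 - ratio a β y)))) y := by
  refine (((hasDerivAt_ratio (a := a) hβ hy).const_mul (-a)).div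
    (hasDerivAt_id y) hy.ne').congr_deriv ?_
  simp only [id]
  field_simp
  ring

/-- For every `q > 0` with `w₁(q) > w₂(q)`, if `w'(q) > 0` then
`w''(q) < 0`.  (At any point of the positive-secrecy region where `w` is increasing,
`w` is strictly concave.) -/
theorem stmt_17 (α δ ρ β₁ β₂ : ℝ) (hα : 2 < α) (hδ : δ = 2 / α)
    (hρ : 0 < ρ) (hβ₂ : 0 < β₂) (hβ : β₂ < β₁)
    (w₁ w₂ w : ℝ → ℝ)
    (hw₁ : ∀ q, w₁ q = 1 + β₁ * (1 + ρ ^ δ * q) ^ (-(α / 2)))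
    (hw₂ : ∀ q, w₂ q = 1 + β₂ * (ρ ^ δ * q) ^ (-(α / 2)))
    (hw : ∀ q, w q = Real.log (w₁ q / w₂ q)) :
    ∀ q > (0 : ℝ), w₂ q < w₁ q → 0 < deriv w q → deriv (deriv w) q < 0 := by
  intro q hq hlt hpos
  have hβ₁ : 0 < β₁ := hβ₂.trans hβ
  have hk : 0 < ρ ^ δ := Real.rpow_pos_of_pos hρ δ
  obtain ⟨a, ha⟩ : ∃ a, a = α / 2 := ⟨_, rfl⟩
  have ha0 : 0 < a := by linarith
  rw [← ha] at hw₁ hw₂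
  generalize ρ ^ δ = k at hw₁ hw₂ hk
  have hlin₂ : ∀ t : ℝ, HasDerivAt (fun t : ℝ => k * t) k t := fun t => by
    simpa using (hasDerivAt_id t).const_mul k
  have hlin₁ : ∀ t : ℝ, HasDerivAt (fun t : ℝ => 1 + k * t) k t := fun t =>
    (hlin₂ t).const_add 1
  have hw' : ∀ t > (0 : ℝ), w t =
      Real.log (1 + β₁ * (1 + k * t) ^ (-a)) - Real.log (1 + β₂ * (k * t) ^ (-a)) := by
    intro t ht
    have hkt : 0 < k * t := mul_pos hk ht
    rw [hw, hw₁, hw₂, Real.log_div (by positivity) (by positivity)]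
  have hd : ∀ t > (0 : ℝ), deriv w t =
      -a * ratio a β₁ (1 + k * t) / (1 + k * t) * k - -a * ratio a β₂ (k * t) / (k * t) * k := by
    intro t ht
    have hkt : 0 < k * t := mul_pos hk ht
    have h₁ := (hasDerivAt_log_one_add (a := a) hβ₁ (by linarith : 0 < 1 + k * t)).comp t (hlin₁ t)
    have h₂ := (hasDerivAt_log_one_add (a := a) hβ₂ hkt).comp t (hlin₂ t)
    refine ((h₁.sub h₂).congr_of_eventuallyEq ?_).deriv
    filter_upwards [lt_mem_nhds ht] with s hs using hw' s hs
  have hx : 0 < k * q := mul_pos hk hq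
  have hy : 0 < 1 + k * q := by linarith
  have hdd : deriv (deriv w) q =
      a * (ratio a β₁ (1 + k * q) / (1 + k * q) * (1 + k * q)⁻¹ *
        (1 + a * (1 - ratio a β₁ (1 + k * q)))) * k * k -
      a * (ratio a β₂ (k * q) / (k * q) * (k * q)⁻¹ * (1 + a * (1 - ratio a β₂ (k * q)))) * k * k := by
    have h₁ := (hasDerivAt_ratio_div (a := a) hβ₁ hy).comp q (hlin₁ q) |>.mul_const k
    have h₂ := (hasDerivAt_ratio_div (a := a) hβ₂ hx).comp q (hlin₂ q) |>.mul_const k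
    refine ((h₁.sub h₂).congr_of_eventuallyEq ?_).deriv
    filter_upwards [lt_mem_nhds hq] with s hs using hd s hs
  have hu : ratio a β₂ (k * q) < ratio a β₁ (1 + k * q) := by
    rw [hw₁, hw₂] at hlt
    unfold ratio
    rw [div_lt_div_iff₀ (by positivity) (by positivity)]
    linarith
  have hu₁ := ratio_lt_one (a := a) hβ₁ hy
  have hp₁ := ratio_pos (a := a) hβ₁ hy
  have hp₂ := ratio_pos (a := a) hβ₂ hx
  rw [hd q hq] at hpos
  rw [hdd]
  generalize ratio a β₁ (1 + k * q) = u₁ at *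
  generalize ratio a β₂ (k * q) = u₂ at *
  have hslope : u₁ / (1 + k * q) < u₂ / (k * q) := by
    have h : 0 < a * k * (u₂ / (k * q) - u₁ / (1 + k * q)) := by
      convert hpos using 1
      ring
    exact sub_pos.1 (pos_of_mul_pos_right h (by positivity))
  have hinv : (1 + k * q)⁻¹ < (k * q)⁻¹ := inv_strictAnti₀ hx (by linarith)
  have hfac : 1 + a * (1 - u₁) < 1 + a * (1 - u₂) := by gcongr
  have hfac₁ : 0 < 1 + a * (1 - u₁) := by
    have := mul_pos ha0 (sub_pos.2 hu₁)
    linarith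
  have hmain : u₁ / (1 + k * q) * (1 + k * q)⁻¹ * (1 + a * (1 - u₁)) <
      u₂ / (k * q) * (k * q)⁻¹ * (1 + a * (1 - u₂)) := by
    gcongr
  rw [sub_neg]
  gcongr
end

section
/- At the point q_m one has w(q_m) = 0 and w'(q_m) = ((w₁(q_m) − 1)/(δ·w₁(q_m)))·(1/q_m − ρ^δ/(1 + ρ^δ·q_m)) > 0. -/
/-!
Write `x = ρ ^ δ * qm` and `r = (β₁ / β₂) ^ δ > 1`. The definition of `qm` says `x = 1 / (r - 1)`, so
`1 + x = r * x`. Since `δ * (-(α / 2)) = -1`, raising this to the power `-(α / 2)` gives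
`β₁ * (1 + x) ^ (-(α / 2)) = β₂ * x ^ (-(α / 2))`, that is, `w₁ qm = w₂ qm`, and so `w qm = 0`.
At a point where `w₁ = w₂` the derivative of `log (w₁ / w₂)` is `(w₁' - w₂') / w₁`; here
`w₁' = -(w₁ - 1) / δ * (ρ ^ δ / (1 + x))` and `w₂' = -(w₂ - 1) / δ * (1 / qm)`, which gives the
formula. Positivity holds because `1 / qm = ρ ^ δ / x > ρ ^ δ / (1 + x)`.
-/

/-- At the point `q_m` one has `w(q_m) = 0` and
`w'(q_m) = ((w₁(q_m) − 1)/(δ·w₁(q_m)))·(1/q_m − ρ^δ/(1 + ρ^δ·q_m)) > 0`. -/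
theorem stmt_18 (α δ ρ β₁ β₂ : ℝ) (hα : 2 < α) (hδ : δ = 2 / α)
    (hρ : 0 < ρ) (hβ₂ : 0 < β₂) (hβ : β₂ < β₁)
    (w₁ w₂ w : ℝ → ℝ) (qm : ℝ)
    (hw₁ : ∀ q, w₁ q = 1 + β₁ * (1 + ρ ^ δ * q) ^ (-(α / 2)))
    (hw₂ : ∀ q, w₂ q = 1 + β₂ * (ρ ^ δ * q) ^ (-(α / 2)))
    (hw : ∀ q, w q = Real.log (w₁ q / w₂ q))
    (hqm : qm = ρ ^ (-δ) / ((β₁ / β₂) ^ δ - 1)) :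
    w qm = 0 ∧
    deriv w qm =
      ((w₁ qm - 1) / (δ * w₁ qm)) * (1 / qm - ρ ^ δ / (1 + ρ ^ δ * qm)) ∧
    0 < deriv w qm := by
  have hα0 : 0 < α := by linarith
  have hδ0 : 0 < δ := by rw [hδ]; positivity
  have hβ₁ : 0 < β₁ := hβ₂.trans hβ
  have hb : 1 < β₁ / β₂ := (one_lt_div hβ₂).2 hβ
  have hr : 1 < (β₁ / β₂) ^ δ := Real.one_lt_rpow hb hδ0
  have hrp : ((β₁ / β₂) ^ δ) ^ (-(α / 2)) = β₂ / β₁ := by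
    have he : δ * (-(α / 2)) = -1 := by rw [hδ]; field_simp
    rw [← Real.rpow_mul (by positivity), he, Real.rpow_neg_one, inv_div]
  have hp : -(α / 2) = -(1 / δ) := by rw [hδ]; field_simp
  have hc : 0 < ρ ^ δ := Real.rpow_pos_of_pos hρ δ
  rw [Real.rpow_neg hρ.le] at hqm
  generalize (β₁ / β₂) ^ δ = r at hr hrp hqm
  generalize ρ ^ δ = c at hc hqm hw₁ hw₂ ⊢
  generalize -(α / 2) = p at hp hrp hw₁ hw₂
  have hr1 : 0 < r - 1 := by linarith
  have hq : 0 < qm := by rw [hqm]; positivity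
  have hx : 0 < c * qm := by positivity
  have h1x : 1 + c * qm = r * (c * qm) := by
    rw [hqm]; field_simp; ring
  have hA : β₁ * (1 + c * qm) ^ p = β₂ * (c * qm) ^ p := by
    rw [h1x, Real.mul_rpow (by linarith) hx.le, hrp]; field_simp
  have hw12 : w₁ qm = w₂ qm := by rw [hw₁, hw₂, hA]
  have hApos : 0 < w₁ qm - 1 := by
    rw [hw₁, add_sub_cancel_left]; positivity
  have hWpos : 0 < w₁ qm := by linarith
  have hd₁ : HasDerivAt w₁ ((w₁ qm - 1) * (p * (c / (1 + c * qm)))) qm := by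
    have h : HasDerivAt (fun q => 1 + c * q) c qm := by
      simpa using ((hasDerivAt_id qm).const_mul c).const_add 1
    have h' := ((h.rpow_const (p := p) (Or.inl (by positivity))).const_mul β₁).const_add 1
    rw [← funext hw₁] at h'
    refine h'.congr_deriv ?_
    rw [hw₁, Real.rpow_sub_one (by positivity)]
    ring
  have hd₂ : HasDerivAt w₂ ((w₁ qm - 1) * (p * (1 / qm))) qm := by
    have h : HasDerivAt (fun q => c * q) c qm := by
      simpa using (hasDerivAt_id qm).const_mul c
    have h' := ((h.rpow_const (p := p) (Or.inl hx.ne')).const_mul β₂).const_add 1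
    rw [← funext hw₂] at h'
    refine h'.congr_deriv ?_
    rw [hw12, hw₂, Real.rpow_sub_one hx.ne']
    field_simp
    ring
  have hd : deriv w qm =
      ((w₁ qm - 1) / (δ * w₁ qm)) * (1 / qm - c / (1 + c * qm)) := by
    have hW₂ : w₂ qm ≠ 0 := hw12 ▸ hWpos.ne'
    have h := (hd₁.div hd₂ hW₂).log (div_ne_zero hWpos.ne' hW₂)
    have hwf : w = fun q => Real.log ((w₁ / w₂) q) := funext hw
    rw [hwf, h.deriv, Pi.div_apply, ← hw12, div_self hWpos.ne', hp]
    field_simp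
    ring
  refine ⟨?_, hd, ?_⟩
  · rw [hw, ← hw12, div_self hWpos.ne', Real.log_one]
  · rw [hd]
    have h : 1 / qm - c / (1 + c * qm) = 1 / (qm * (1 + c * qm)) := by
      field_simp; ring
    rw [h]
    positivity
end

section
/- Let ρ_c > 0, suppose q_m < 1, and define Q(q) = w'(q)·(1 + ρ_c·q) − ρ_c·w(q) and J(q) = w(q)/(1 + ρ_c·q) for q > 0. Then: (i) J'(q) = Q(q)/(1 + ρ_c·q)² for every q > 0; (ii) Q(q_m) > 0; (iii) every q₀ ∈ (q_m, 1] with Q(q₀) = 0 satisfies Q'(q₀) < 0; consequently Q has at most one zero in (q_m, 1], and J attains its maximum over (q_m, 1] at a unique point, namely q = 1 if Q(1) > 0 and the unique zero of Q in (q_m, 1] if Q(1) ≤ 0. -/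
/-!
After factoring out the scale `a = ρ ^ δ`, the function `w` becomes
`log (1 + F b₁ c q) - log (1 + F b₂ 0 q)` with `F b c q = b * (q + c) ^ (-k)`, `k = α / 2`,
`c = a⁻¹` and `b₁ > b₂ > 0`.  Put `G = F / ((q + c) (1 + F))`.  Then `log (1 + F)` has derivative
`-k G`, and `G` has logarithmic derivative `-(1 + k / (1 + F)) / (q + c)`, so
`w' = k (G₂ - G₁)` and `w''` is explicit (`hasDerivAt_log_one_add_powTerm`,
`hasDerivAt_powRate`).

The point `q_m` is the crossing point of `F₁` and `F₂`: they agree there, so `w (q_m) = 0` and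
`w' (q_m) > 0`, which gives `Q (q_m) > 0`; beyond it `F₁ > F₂`, hence `w > 0`.  At a zero `q₀` of
`Q` beyond `q_m`, `w (q₀) > 0` forces `w' (q₀) > 0`, that is `G₂ > G₁`; as also `q < q + c` and
`1 + F₂ < 1 + F₁`, every factor of `-G₂'` exceeds the matching factor of `-G₁'`, so
`w'' (q₀) < 0`.  Since `Q' = w'' (1 + ρ_c q)`, the function `Q` crosses zero only downwards, and it
is therefore positive to the left of every point where it is nonnegative
(`pos_of_lt_of_deriv_neg_of_zero`).  As `Q` has the sign of `J'`, the statements on `J` follow.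
-/

open Real Set

/-- The shifted power law `b (q + c)^(-k)`; both `w₁ - 1` and `w₂ - 1` are of this form, the second
one with shift `c = 0`. -/
noncomputable def powTerm (k b c q : ℝ) : ℝ := b * (q + c) ^ (-k)

/-- The function `F / ((q + c) (1 + F))` for `F = powTerm k b c q`; up to the factor `-k` it is the
derivative of `log (1 + F)`. -/
noncomputable def powRate (k b c q : ℝ) : ℝ :=
  powTerm k b c q / ((q + c) * (1 + powTerm k b c q))

lemma powTerm_pos {k b c q : ℝ} (hb : 0 < b) (hq : 0 < q + c) : 0 < powTerm k b c q :=
  mul_pos hb (rpow_pos_of_pos hq _)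

lemma powRate_pos {k b c q : ℝ} (hb : 0 < b) (hq : 0 < q + c) : 0 < powRate k b c q := by
  have := powTerm_pos (k := k) hb hq
  unfold powRate
  positivity

lemma hasDerivAt_powTerm {k b c q : ℝ} (hq : 0 < q + c) :
    HasDerivAt (powTerm k b c) (-k * powTerm k b c q / (q + c)) q := by
  have h := ((((hasDerivAt_id q).add_const c).rpow_const (p := -k) (Or.inl hq.ne'))).const_mul b
  have e : (q + c) ^ (-k - 1) = (q + c) ^ (-k) / (q + c) := by
    rw [rpow_sub hq, rpow_one]
  refine h.congr_deriv ?_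
  simp only [id, e, powTerm]
  ring

lemma hasDerivAt_log_one_add_powTerm {k b c q : ℝ} (hb : 0 < b) (hq : 0 < q + c) :
    HasDerivAt (fun x => Real.log (1 + powTerm k b c x)) (-k * powRate k b c q) q := by
  have hF := powTerm_pos (k := k) hb hq
  have h := ((hasDerivAt_powTerm (k := k) (b := b) hq).const_add 1).log (by positivity)
  refine h.congr_deriv ?_
  unfold powRate
  field_simp

lemma hasDerivAt_powRate {k b c q : ℝ} (hb : 0 < b) (hq : 0 < q + c) :
    HasDerivAt (powRate k b c)
      (-(powRate k b c q * ((1 / (q + c)) * (1 + k / (1 + powTerm k b c q))))) q := by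
  have hF := powTerm_pos (k := k) hb hq
  have h1 := hasDerivAt_powTerm (k := k) (b := b) hq
  have h := h1.div (((hasDerivAt_id q).add_const c).mul (h1.const_add 1))
    (mul_pos hq (by positivity : 0 < 1 + powTerm k b c q)).ne'
  refine h.congr_deriv ?_
  simp only [powRate, id, Pi.mul_apply]
  field_simp
  ring

/-- With `r = (b₁ / b₂) ^ (1 / k)`, both power laws become values of the single decreasing function
`powTerm k b₂ 0`, so comparing them at `q` amounts to comparing `(q + c) / r` with `q`. -/
lemma powTerm_eq_rescale {k b₁ b₂ c q : ℝ} (hk : 0 < k) (hb₁ : 0 < b₁) (hb₂ : 0 < b₂)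
    (hq : 0 < q + c) :
    powTerm k b₁ c q = powTerm k b₂ 0 ((q + c) / (b₁ / b₂) ^ (1 / k)) := by
  have hr : (0 : ℝ) < b₁ / b₂ := by positivity
  unfold powTerm
  rw [add_zero, div_rpow hq.le (rpow_pos_of_pos hr _).le, ← rpow_mul hr.le,
    show 1 / k * -k = -1 by field_simp, rpow_neg_one]
  field_simp

/-- A function whose derivative is negative at each of its zeros is positive to the left of any
point where it is nonnegative. -/
lemma pos_of_lt_of_deriv_neg_of_zero {f : ℝ → ℝ} {s t : ℝ} (hst : s < t)
    (hd : ∀ x ∈ Icc s t, DifferentiableAt ℝ f x)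
    (hz : ∀ x ∈ Icc s t, f x = 0 → deriv f x < 0) (ht : 0 ≤ f t) : 0 < f s := by
  by_contra! hs
  have hle : ∀ ⦃x⦄, x ∈ Icc s t → f x ≤ 0 :=
    image_le_of_deriv_right_lt_deriv_boundary' (f' := deriv f) (B := fun _ => 0) (B' := fun _ => 0)
      (fun x hx => (hd x hx).continuousAt.continuousWithinAt)
      (fun x hx => (hd x (Ico_subset_Icc_self hx)).hasDerivAt.hasDerivWithinAt) hs
      continuousOn_const (fun x _ => hasDerivWithinAt_const x _ (0 : ℝ))
      (fun x hx h0 => hz x (Ico_subset_Icc_self hx) h0)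
  have htm : t ∈ Icc s t := right_mem_Icc.2 hst.le
  have h0 : f t = 0 := le_antisymm (hle htm) ht
  -- Just before `t` the function is positive, because it decreases through zero there.
  have hev := (eventually_nhdsWithin_sign_eq_of_deriv_neg (hz t htm h0) h0).filter_mono
    (nhdsWithin_le_nhds (s := Iio t))
  obtain ⟨x, hx, hxm⟩ := (hev.and (Ico_mem_nhdsLT hst)).exists
  rw [sign_pos (sub_pos.2 hxm.2), sign_eq_one_iff] at hx
  exact absurd (hle (Ico_subset_Icc_self hxm)) (not_le.2 hx)

/-- Let `ρ_c > 0`, suppose `q_m < 1`, and define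
`Q(q) = w'(q)·(1 + ρ_c·q) − ρ_c·w(q)` and `J(q) = w(q)/(1 + ρ_c·q)` for `q > 0`.  Then:
(i) `J'(q) = Q(q)/(1 + ρ_c·q)²` for every `q > 0`;
(ii) `Q(q_m) > 0`;
(iii) every `q₀ ∈ (q_m, 1]` with `Q(q₀) = 0` satisfies `Q'(q₀) < 0`; consequently `Q`
has at most one zero in `(q_m, 1]`, and `J` attains its maximum over `(q_m, 1]` at a
unique point, namely `q = 1` if `Q(1) > 0` and the unique zero of `Q` in `(q_m, 1]`
if `Q(1) ≤ 0`. -/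
theorem stmt_19 (α δ ρ β₁ β₂ : ℝ) (hα : 2 < α) (hδ : δ = 2 / α)
    (hρ : 0 < ρ) (hβ₂ : 0 < β₂) (hβ : β₂ < β₁)
    (w₁ w₂ w : ℝ → ℝ) (qm : ℝ)
    (hw₁ : ∀ q, w₁ q = 1 + β₁ * (1 + ρ ^ δ * q) ^ (-(α / 2)))
    (hw₂ : ∀ q, w₂ q = 1 + β₂ * (ρ ^ δ * q) ^ (-(α / 2)))
    (hw : ∀ q, w q = Real.log (w₁ q / w₂ q))
    (hqm : qm = ρ ^ (-δ) / ((β₁ / β₂) ^ δ - 1))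
    (hqm1 : qm < 1)
    (ρc : ℝ) (hρc : 0 < ρc)
    (Q J : ℝ → ℝ)
    (hQ : ∀ q, Q q = deriv w q * (1 + ρc * q) - ρc * w q)
    (hJ : ∀ q, J q = w q / (1 + ρc * q)) :
    (∀ q > (0 : ℝ), deriv J q = Q q / (1 + ρc * q) ^ 2) ∧
    (0 < Q qm) ∧
    (∀ q₀ ∈ Set.Ioc qm 1, Q q₀ = 0 → deriv Q q₀ < 0) ∧
    (∀ q₁ ∈ Set.Ioc qm 1, ∀ q₂ ∈ Set.Ioc qm 1, Q q₁ = 0 → Q q₂ = 0 → q₁ = q₂) ∧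
    (∃ qs ∈ Set.Ioc qm 1,
      (∀ q ∈ Set.Ioc qm 1, q ≠ qs → J q < J qs) ∧
      (0 < Q 1 → qs = 1) ∧
      (Q 1 ≤ 0 → Q qs = 0)) := by
  have hα0 : 0 < α := by linarith
  obtain ⟨k, hkdef⟩ : ∃ k, k = α / 2 := ⟨_, rfl⟩
  have hk : 0 < k := by rw [hkdef]; positivity
  have hδk : δ = 1 / k := by rw [hδ, hkdef]; field_simp
  obtain ⟨a, hadef⟩ : ∃ a, a = ρ ^ δ := ⟨_, rfl⟩
  have ha : 0 < a := hadef ▸ rpow_pos_of_pos hρ δ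
  obtain ⟨c, hcdef⟩ : ∃ c, c = a⁻¹ := ⟨_, rfl⟩
  have hc : 0 < c := hcdef ▸ inv_pos.2 ha
  obtain ⟨m, hmdef⟩ : ∃ m, m = a ^ (-k) := ⟨_, rfl⟩
  have hm : 0 < m := hmdef ▸ rpow_pos_of_pos ha _
  have hβ₁ : 0 < β₁ := hβ₂.trans hβ
  obtain ⟨b₁, hb₁def⟩ : ∃ b, b = β₁ * m := ⟨_, rfl⟩
  obtain ⟨b₂, hb₂def⟩ : ∃ b, b = β₂ * m := ⟨_, rfl⟩
  have hb₁ : 0 < b₁ := hb₁def ▸ mul_pos hβ₁ hm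
  have hb₂ : 0 < b₂ := hb₂def ▸ mul_pos hβ₂ hm
  obtain ⟨r, hrdef⟩ : ∃ r, r = (b₁ / b₂) ^ (1 / k) := ⟨_, rfl⟩
  have hratio : b₁ / b₂ = β₁ / β₂ := by rw [hb₁def, hb₂def]; field_simp
  have hr : 1 < r := by
    rw [hrdef, hratio]
    exact one_lt_rpow ((one_lt_div hβ₂).2 hβ) (by positivity)
  have hqmc : qm = c / (r - 1) := by
    rw [hqm, hrdef, hratio, hδk, hcdef, hadef, hδk, rpow_neg hρ.le]
  have hqm0 : 0 < qm := hqmc ▸ div_pos hc (sub_pos.2 hr)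
  have hF₁ : ∀ q, 0 < q → 0 < powTerm k b₁ c q := fun q hq => powTerm_pos hb₁ (by positivity)
  have hF₂ : ∀ q, 0 < q → 0 < powTerm k b₂ 0 q := fun q hq => powTerm_pos hb₂ (by simpa)
  have hwF : ∀ q, 0 < q →
      w q = Real.log (1 + powTerm k b₁ c q) - Real.log (1 + powTerm k b₂ 0 q) := by
    intro q hq
    have e₁ : w₁ q = 1 + powTerm k b₁ c q := by
      rw [hw₁, ← hadef, ← hkdef, powTerm, hb₁def, hmdef,
        show 1 + a * q = a * (q + c) by rw [hcdef]; field_simp; ring,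
        mul_rpow ha.le (by positivity), mul_assoc]
    have e₂ : w₂ q = 1 + powTerm k b₂ 0 q := by
      rw [hw₂, ← hadef, ← hkdef, powTerm, hb₂def, hmdef, add_zero,
        mul_rpow ha.le hq.le, mul_assoc]
    have := hF₁ q hq
    have := hF₂ q hq
    rw [hw, e₁, e₂, Real.log_div (by positivity) (by positivity)]
  have hwd : ∀ q, 0 < q → HasDerivAt w (k * (powRate k b₂ 0 q - powRate k b₁ c q)) q := by
    intro q hq
    have h := (hasDerivAt_log_one_add_powTerm (k := k) (c := c) hb₁ (q := q) (by positivity)).sub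
      (hasDerivAt_log_one_add_powTerm (k := k) (c := 0) hb₂ (q := q) (by simpa))
    refine (h.congr_deriv (by ring)).congr_of_eventuallyEq ?_
    filter_upwards [lt_mem_nhds hq] with x hx using hwF x hx
  have hdw : ∀ q, 0 < q → HasDerivAt (deriv w)
      (k * (powRate k b₁ c q * ((1 / (q + c)) * (1 + k / (1 + powTerm k b₁ c q)))
        - powRate k b₂ 0 q * ((1 / (q + 0)) * (1 + k / (1 + powTerm k b₂ 0 q))))) q := by
    intro q hq
    have h := ((hasDerivAt_powRate (k := k) (c := 0) hb₂ (q := q) (by simpa)).sub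
      (hasDerivAt_powRate (k := k) (c := c) hb₁ (q := q) (by positivity))).const_mul k
    refine (h.congr_deriv (by ring)).congr_of_eventuallyEq ?_
    filter_upwards [lt_mem_nhds hq] with x hx using (hwd x hx).deriv
  have hlin : ∀ q, HasDerivAt (fun x => 1 + ρc * x) ρc q := fun q => by
    simpa using ((hasDerivAt_id q).const_mul ρc).const_add 1
  have hQd : ∀ q, 0 < q → HasDerivAt Q (deriv (deriv w) q * (1 + ρc * q)) q := by
    intro q hq
    have h := ((hdw q hq).differentiableAt.hasDerivAt.mul (hlin q)).sub
      ((hwd q hq).differentiableAt.hasDerivAt.const_mul ρc)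
    refine (h.congr_deriv (by ring)).congr_of_eventuallyEq ?_
    exact Filter.Eventually.of_forall fun x => by simp [hQ]
  have hJd : ∀ q, 0 < q → HasDerivAt J (Q q / (1 + ρc * q) ^ 2) q := by
    intro q hq
    have h := (hwd q hq).differentiableAt.hasDerivAt.div (hlin q) (by positivity)
    refine (h.congr_deriv (by rw [hQ]; ring)).congr_of_eventuallyEq ?_
    exact Filter.Eventually.of_forall fun x => by simp [hJ]
  have hcross : powTerm k b₁ c qm = powTerm k b₂ 0 qm := by
    rw [powTerm_eq_rescale hk hb₁ hb₂ (by positivity), ← hrdef]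
    congr 1
    have : r - 1 ≠ 0 := (sub_pos.2 hr).ne'
    rw [hqmc]
    field_simp
    ring
  have hlt : ∀ q, qm < q → powTerm k b₂ 0 q < powTerm k b₁ c q := by
    intro q hq
    have hq0 := hqm0.trans hq
    rw [powTerm_eq_rescale hk hb₁ hb₂ (by positivity), ← hrdef, powTerm, powTerm, add_zero,
      add_zero]
    refine mul_lt_mul_of_pos_left ?_ hb₂
    refine rpow_lt_rpow_of_neg (by positivity) ?_ (neg_lt_zero.2 hk)
    rw [div_lt_iff₀ (by positivity)]
    rw [hqmc, div_lt_iff₀ (sub_pos.2 hr)] at hq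
    linarith
  have hQqm : 0 < Q qm := by
    have hw0 : w qm = 0 := by rw [hwF qm hqm0, hcross, sub_self]
    have hgt : powRate k b₁ c qm < powRate k b₂ 0 qm := by
      have := hF₂ qm hqm0
      rw [powRate, powRate, hcross, add_zero]
      gcongr
      linarith
    rw [hQ, hw0, (hwd qm hqm0).deriv, mul_zero, sub_zero]
    have := sub_pos.2 hgt
    positivity
  have hz : ∀ q ∈ Set.Ioc qm 1, Q q = 0 → deriv Q q < 0 := by
    rintro q ⟨hq, -⟩ h0
    have hq0 := hqm0.trans hq
    have h₁ := hF₁ q hq0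
    have h₂ := hF₂ q hq0
    have h₁₂ := hlt q hq
    have hwpos : 0 < w q := by
      rw [hwF q hq0, sub_pos]
      exact Real.log_lt_log (by positivity) (by linarith)
    have hl : 0 < 1 + ρc * q := by positivity
    have hdpos : 0 < deriv w q := by
      rw [hQ] at h0
      have := mul_pos hρc hwpos
      exact pos_of_mul_pos_left (by linarith) hl.le
    rw [(hwd q hq0).deriv] at hdpos
    have hG : powRate k b₁ c q < powRate k b₂ 0 q := sub_pos.1 (pos_of_mul_pos_right hdpos hk.le)
    have hG₁ : 0 < powRate k b₁ c q := powRate_pos hb₁ (by positivity)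
    rw [(hQd q hq0).deriv, (hdw q hq0).deriv]
    refine mul_neg_of_neg_of_pos (mul_neg_of_pos_of_neg hk (sub_neg.2 ?_)) hl
    have hfac : (1 / (q + c)) * (1 + k / (1 + powTerm k b₁ c q)) ≤
        (1 / (q + 0)) * (1 + k / (1 + powTerm k b₂ 0 q)) := by
      rw [add_zero]
      gcongr
      linarith
    exact mul_lt_mul hG hfac (by positivity) (hG₁.trans hG).le
  have hleft : ∀ s t, qm < s → s < t → t ≤ 1 → 0 ≤ Q t → 0 < Q s := by
    intro s t hs hst ht hQt
    exact pos_of_lt_of_deriv_neg_of_zero hst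
      (fun x hx => (hQd x (hqm0.trans (hs.trans_le hx.1))).differentiableAt)
      (fun x hx => hz x ⟨hs.trans_le hx.1, hx.2.trans ht⟩) hQt
  have hJcont : ContinuousOn J (Ioi 0) := fun x hx =>
    (hJd x hx).continuousAt.continuousWithinAt
  have hmono : ∀ t, t ∈ Ioc qm 1 → 0 ≤ Q t → ∀ q, qm < q → q < t → J q < J t := by
    intro t ht hQt q hq hqt
    refine strictMonoOn_of_deriv_pos (convex_Icc q t)
      (hJcont.mono fun x hx => (hqm0.trans hq).trans_le hx.1) ?_
      (left_mem_Icc.2 hqt.le) (right_mem_Icc.2 hqt.le) hqt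
    intro x hx
    rw [interior_Icc] at hx
    have hx0 : 0 < x := (hqm0.trans hq).trans hx.1
    rw [(hJd x hx0).deriv]
    have := hleft x t (hq.trans hx.1) hx.2 ht.2 hQt
    positivity
  refine ⟨fun q hq => (hJd q hq).deriv, hQqm, hz, ?_, ?_⟩
  · intro q₁ h₁ q₂ h₂ e₁ e₂
    rcases lt_trichotomy q₁ q₂ with h | h | h
    · exact absurd e₁ (hleft _ _ h₁.1 h h₂.2 e₂.ge).ne'
    · exact h
    · exact absurd e₂ (hleft _ _ h₂.1 h h₁.2 e₁.ge).ne'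
  · rcases lt_or_ge 0 (Q 1) with h1 | h1
    · exact ⟨1, ⟨hqm1, le_rfl⟩,
        fun q hq hne => hmono 1 ⟨hqm1, le_rfl⟩ h1.le q hq.1 (lt_of_le_of_ne hq.2 hne),
        fun _ => rfl, fun h => absurd h1 (not_lt.2 h)⟩
    · obtain ⟨qs, hqs, hQs⟩ : (0 : ℝ) ∈ Q '' Icc qm 1 :=
        intermediate_value_Icc' hqm1.le
          (fun x hx => (hQd x (hqm0.trans_le hx.1)).continuousAt.continuousWithinAt)
          ⟨h1, hQqm.le⟩
      have hqslt : qm < qs := lt_of_le_of_ne hqs.1 (by rintro rfl; exact hQqm.ne' hQs)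
      refine ⟨qs, ⟨hqslt, hqs.2⟩, ?_, fun h => absurd h (not_lt.2 h1), fun _ => hQs⟩
      intro q hq hne
      rcases lt_or_gt_of_ne hne with h | h
      · exact hmono qs ⟨hqslt, hqs.2⟩ hQs.ge q hq.1 h
      · refine strictAntiOn_of_deriv_neg (convex_Icc qs q)
          (hJcont.mono fun x hx => (hqm0.trans hqslt).trans_le hx.1) ?_
          (left_mem_Icc.2 h.le) (right_mem_Icc.2 h.le) h
        intro x hx
        rw [interior_Icc] at hx
        have hx0 : 0 < x := (hqm0.trans hqslt).trans hx.1
        rw [(hJd x hx0).deriv]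
        -- Were `Q` nonnegative at `x > qs`, it would be positive at its zero `qs`.
        have hneg : Q x < 0 := by
          by_contra! hc
          exact (hleft qs x hqslt hx.1 (hx.2.le.trans hq.2) hc).ne' hQs
        exact div_neg_of_neg_of_pos hneg (by positivity)
end
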